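/- arXiv:0712.1014 — 4 statements merged into one kernel-verified Lean document; each statement's English description precedes it below -/
import Mathlib

section
/- Let F be an S-forest and (H, H') ∈ M₂(F). Then H ∪ H' = U(F) ∪ L(F); equivalently, H ∪ H' consists exactly of those edges of F that have an endpoint of degree at most 2 (i.e., all edges of F except the edges joining two vertices of degree 3). -/
open SimpleGraph

/-- A matching of `G`, given as a finite set of edges of `G` that are pairwise non-adjacent. -/
def IsMatchingE {V : Type*} (G : SimpleGraph V) (M : Finset (Sym2 V)) : Prop :=
  ↑M ⊆ G.edgeSet ∧ ∀ e ∈ M, ∀ f ∈ M, e ≠ f → ∀ v : V, ¬(v ∈ e ∧ v ∈ f)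

/-- A vertex is covered by a set of edges if some edge of it is incident to the vertex. -/
def Covers {V : Type*} (M : Finset (Sym2 V)) (v : V) : Prop := ∃ e ∈ M, v ∈ e

/-- `β(G)`: the maximum size of a matching of `G`. -/
noncomputable def gBeta {V : Type*} (G : SimpleGraph V) : ℕ :=
  sSup {n | ∃ M : Finset (Sym2 V), IsMatchingE G M ∧ M.card = n}

/-- `λ(G)`: the maximum of `|H| + |H'|` over pairs `(H, H')` of disjoint matchings of `G`. -/
noncomputable def gLam {V : Type*} (G : SimpleGraph V) : ℕ :=
  sSup {n | ∃ H H' : Finset (Sym2 V), IsMatchingE G H ∧ IsMatchingE G H' ∧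
    Disjoint H H' ∧ H.card + H'.card = n}

/-- `α(G)`: the maximum of `|H|` over pairs `(H, H')` of disjoint matchings of `G`
with `|H| + |H'| = λ(G)`. -/
noncomputable def gAlpha {V : Type*} (G : SimpleGraph V) : ℕ :=
  sSup {n | ∃ H H' : Finset (Sym2 V), IsMatchingE G H ∧ IsMatchingE G H' ∧
    Disjoint H H' ∧ H.card + H'.card = gLam G ∧ H.card = n}

/-- `β₁(G)`: the maximum of `β(G \ F)` over maximum matchings `F` of `G`. -/
noncomputable def gBeta1 {V : Type*} (G : SimpleGraph V) : ℕ :=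
  sSup {n | ∃ F : Finset (Sym2 V), IsMatchingE G F ∧ F.card = gBeta G ∧
    gBeta (G.deleteEdges ↑F) = n}

/-- Membership in `M₂(G)`: `(H, H')` is a pair of disjoint matchings of `G` with
`|H| + |H'| = λ(G)` and `|H| = α(G)`. -/
def InM2 {V : Type*} (G : SimpleGraph V) (H H' : Finset (Sym2 V)) : Prop :=
  IsMatchingE G H ∧ IsMatchingE G H' ∧ Disjoint H H' ∧
  H.card + H'.card = gLam G ∧ H.card = gAlpha G

/-- Membership in `M₂(G, M)`: pairs from `M₂(G)` maximizing `|M ∩ (H ∪ H')|`. -/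
def InM2M {V : Type*} [DecidableEq V] (G : SimpleGraph V) (M H H' : Finset (Sym2 V)) : Prop :=
  InM2 G H H' ∧ ∀ K K' : Finset (Sym2 V), InM2 G K K' →
    (M ∩ (K ∪ K')).card ≤ (M ∩ (H ∪ H')).card

/-- The degree of a vertex `v` in the graph `F`. -/
noncomputable def fdeg {V : Type*} (F : SimpleGraph V) (v : V) : ℕ := (F.neighborSet v).ncard

/-- The spanner: two paths `a₁a₂a₃a₄a₅` and `b₁b₂b₃b₄b₅` joined by the edge `a₃b₃`.
Vertices `0..4` are `a₁..a₅` and `5..9` are `b₁..b₅`. -/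
def Spanner10 : SimpleGraph (Fin 10) :=
  SimpleGraph.fromEdgeSet
    {s(0, 1), s(1, 2), s(2, 3), s(3, 4), s(5, 6), s(6, 7), s(7, 8), s(8, 9), s(2, 7)}

/-- An S-forest: every connected component is isomorphic to the spanner. -/
def IsSForest {V : Type*} (F : SimpleGraph V) : Prop :=
  ∀ c : F.ConnectedComponent, Nonempty ((F.induce c.supp) ≃g Spanner10)

/-- `U(F)`: edges of `F` incident to a vertex of degree 1. -/
def USet {V : Type*} (F : SimpleGraph V) : Set (Sym2 V) :=
  {e | e ∈ F.edgeSet ∧ ∃ v ∈ e, fdeg F v = 1}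

/-- `L(F)`: edges of `F` not in `U(F)` incident to a vertex of degree 2. -/
def LSet {V : Type*} (F : SimpleGraph V) : Set (Sym2 V) :=
  {e | e ∈ F.edgeSet ∧ e ∉ USet F ∧ ∃ v ∈ e, fdeg F v = 2}

/-- `w` is the base of the 1-vertex `u` of `F`: a 3-vertex at `F`-distance 2 from `u`. -/
def IsBase {V : Type*} (F : SimpleGraph V) (u w : V) : Prop :=
  fdeg F w = 3 ∧ F.dist u w = 2

/-- `Δ(G, F)`: edges of `G` joining a 1-vertex of `F` to its base. -/
def DeltaSet {V : Type*} (G F : SimpleGraph V) : Set (Sym2 V) :=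
  {e | e ∈ G.edgeSet ∧ ∃ u w : V, e = s(u, w) ∧ fdeg F u = 1 ∧ IsBase F u w}

/-- `B(G, F) = E(G) \ (U(F) ∪ L(F) ∪ Δ(G, F))`. -/
def BSet {V : Type*} (G F : SimpleGraph V) : Set (Sym2 V) :=
  G.edgeSet \ (USet F ∪ LSet F ∪ DeltaSet G F)

/-- Condition (a): no 1-vertex of `F` is incident to an edge from `B(G, F)`. -/
def CondA {V : Type*} (G F : SimpleGraph V) : Prop :=
  ∀ v : V, fdeg F v = 1 → ∀ e ∈ BSet G F, v ∉ e

/-- Condition (b): if a 1-vertex `u` of `F` is incident to an edge from `Δ(G, F)`, then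
the 2-vertex of `F` adjacent to `u` in `F` is not incident to any edge from `B(G, F)`. -/
def CondB {V : Type*} (G F : SimpleGraph V) : Prop :=
  ∀ u v : V, fdeg F u = 1 → (∃ e ∈ DeltaSet G F, u ∈ e) →
    F.Adj u v → fdeg F v = 2 → ∀ e ∈ BSet G F, v ∉ e

/-- Condition (c): for every `L(F)`-`B(G, F)` alternating even closed trail of `G`
containing an edge joining two 2-vertices of `F`, the graph formed by its edges belonging
to `B(G, F)` is not bipartite (2-colorable). -/
def CondC {V : Type*} (G F : SimpleGraph V) : Prop :=
  ∀ (n : ℕ) (e : ℕ → Sym2 V),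
    1 ≤ n →
    (∀ i j, i < 2 * n → j < 2 * n → e i = e j → i = j) →
    (∀ i, i < 2 * n → e i ∈ G.edgeSet) →
    (∀ i, i + 1 < 2 * n → ∃ v : V, v ∈ e i ∧ v ∈ e (i + 1)) →
    (∃ v : V, v ∈ e (2 * n - 1) ∧ v ∈ e 0) →
    (∀ i, i < 2 * n → (i % 2 = 0 → e i ∈ LSet F) ∧ (i % 2 = 1 → e i ∈ BSet G F)) →
    (∃ i, i < 2 * n ∧ ∀ v ∈ e i, fdeg F v = 2) →
    ¬ (SimpleGraph.fromEdgeSet {f | ∃ i, i < 2 * n ∧ f = e i ∧ f ∈ BSet G F}).Colorable 2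

/-!
The union of two matchings has at most two edges at each vertex, so every vertex of degree `3` of
an S-forest is an endpoint of an edge missed by `H ∪ H'`. The paths `a₁…a₅` and `b₁…b₅` are unions
of two disjoint matchings, so a pair of maximum total size misses at most as many edges as there
are edges `a₃b₃`. Since the edges `a₃b₃` are disjoint and cover all vertices of degree `3`, the
missed edges cover these vertices with the fewest edges possible; each missed edge therefore joins
two vertices of degree `3`, and so is one of the `a₃b₃`.

Everything needed about a single spanner transfers to the whole forest along the graph covering
that restricts to the given isomorphism on each component.
-/

namespace IsMatchingE

variable {V : Type*} {G : SimpleGraph V} {M H H' : Finset (Sym2 V)}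

instance [Fintype V] [DecidableEq V] [DecidableRel G.Adj] : Decidable (IsMatchingE G M) :=
  inferInstanceAs (Decidable ((∀ e ∈ M, e ∈ G.edgeSet) ∧ _))

lemma eq_of_mem_of_mem (hM : IsMatchingE G M) {e f : Sym2 V} (he : e ∈ M) (hf : f ∈ M) {v : V}
    (hve : v ∈ e) (hvf : v ∈ f) : e = f :=
  by_contra fun hef => hM.2 e he f hf hef v ⟨hve, hvf⟩

lemma subsingleton_setOf_mk_mem (hM : IsMatchingE G M) (v : V) :
    {w | s(v, w) ∈ M}.Subsingleton := fun _ hw _ hw' => Sym2.congr_right.1 <|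
  hM.eq_of_mem_of_mem hw hw' (Sym2.mem_mk_left _ _) (Sym2.mem_mk_left _ _)

lemma exists_incident_notMem (hH : IsMatchingE G H) (hH' : IsMatchingE G H') {v : V}
    (hv : 3 ≤ fdeg G v) : ∃ e ∈ G.edgeSet, v ∈ e ∧ e ∉ H ∧ e ∉ H' := by
  by_contra! hcontra
  have hsub : G.neighborSet v ⊆ {w | s(v, w) ∈ H} ∪ {w | s(v, w) ∈ H'} := fun w hw =>
    or_iff_not_imp_left.2 (hcontra s(v, w) hw (Sym2.mem_mk_left _ _))
  have hs := hH.subsingleton_setOf_mk_mem v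
  have hs' := hH'.subsingleton_setOf_mk_mem v
  have hdeg : fdeg G v ≤ 1 + 1 :=
    calc fdeg G v ≤ ({w | s(v, w) ∈ H} ∪ {w | s(v, w) ∈ H'}).ncard :=
          Set.ncard_le_ncard hsub (hs.finite.union hs'.finite)
      _ ≤ {w | s(v, w) ∈ H}.ncard + {w | s(v, w) ∈ H'}.ncard := Set.ncard_union_le _ _
      _ ≤ 1 + 1 := Nat.add_le_add ((Set.ncard_le_one hs.finite).2 hs)
          ((Set.ncard_le_one hs'.finite).2 hs')
  lia

lemma card_biUnion_toFinset [DecidableEq V] (hM : IsMatchingE G M) :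
    (M.biUnion Sym2.toFinset).card = 2 * M.card := by
  rw [Finset.card_biUnion, Finset.sum_const_nat (m := 2), mul_comm]
  · exact fun e he => Sym2.card_toFinset_of_not_isDiag e (G.not_isDiag_of_mem_edgeSet (hM.1 he))
  · intro e he f hf hef
    refine Finset.disjoint_left.2 fun v hve hvf => hM.2 e he f hf hef v ?_
    exact ⟨Sym2.mem_toFinset.1 hve, Sym2.mem_toFinset.1 hvf⟩

/- Each edge covers two vertices, so covering the `2|M|` vertices of `M` with at most `|M|` edges
leaves no room for an edge with an endpoint outside `M`. -/
lemma eq_of_covers_of_card_le (hM : IsMatchingE G M) {D : Finset (Sym2 V)}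
    (hcov : ∀ v, Covers M v → Covers D v) (hcard : D.card ≤ M.card)
    (hind : ∀ e ∈ D, (∀ v ∈ e, Covers M v) → e ∈ M) : D = M := by
  classical
  have hmem (K : Finset (Sym2 V)) (v : V) : v ∈ K.biUnion Sym2.toFinset ↔ Covers K v := by
    simp only [Finset.mem_biUnion, Sym2.mem_toFinset, Covers]
  have hsub : M.biUnion Sym2.toFinset ⊆ D.biUnion Sym2.toFinset := fun v hv =>
    (hmem D v).2 (hcov v ((hmem M v).1 hv))
  have hle : (D.biUnion Sym2.toFinset).card ≤ D.card * 2 :=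
    Finset.card_biUnion_le_card_mul _ _ _ fun e _ => by rw [Sym2.card_toFinset]; split <;> simp
  have hverts_card := hM.card_biUnion_toFinset
  have hverts := Finset.eq_of_subset_of_card_le hsub (by lia)
  refine Finset.eq_of_subset_of_card_le (fun e he => hind e he fun v hv => ?_) ?_
  · rw [← hmem, hverts, hmem]
    exact ⟨e, he, hv⟩
  · rw [← hverts] at hle
    lia

lemma card_add_card_le_gLam [Finite V] (hH : IsMatchingE G H) (hH' : IsMatchingE G H')
    (hd : Disjoint H H') : H.card + H'.card ≤ gLam G := by
  have := Fintype.ofFinite (Sym2 V)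
  refine le_csSup ⟨Fintype.card (Sym2 V) + Fintype.card (Sym2 V), ?_⟩ ⟨H, H', hH, hH', hd, rfl⟩
  rintro _ ⟨K, K', -, -, -, rfl⟩
  exact Nat.add_le_add (Finset.card_le_univ K) (Finset.card_le_univ K')

end IsMatchingE

/-- A partition of the edges of `G` into two matchings `N`, `N'` and an induced matching `C` whose
endpoints all have degree at least `3`. Its existence forces every pair of disjoint matchings of
`G` of maximum total size to use exactly the edges outside `C`. -/
structure IsMatchingSplit {V : Type*} (G : SimpleGraph V) (C N N' : Finset (Sym2 V)) : Prop where
  left : IsMatchingE G N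
  right : IsMatchingE G N'
  disjoint : Disjoint N N'
  core : IsMatchingE G C
  edgeSet_diff : G.edgeSet \ ↑C = ↑N ∪ ↑N'
  mem_of_covers : ∀ e ∈ G.edgeSet, (∀ v ∈ e, Covers C v) → e ∈ C
  three_le_fdeg : ∀ v, Covers C v → 3 ≤ fdeg G v

namespace IsMatchingSplit

variable {V : Type*} [Finite V] {G : SimpleGraph V} {C N N' H H' : Finset (Sym2 V)}

lemma ncard_edgeSet_le (h : IsMatchingSplit G C N N') :
    G.edgeSet.ncard ≤ gLam G + C.card := by
  classical
  have hlam := h.left.card_add_card_le_gLam h.right h.disjoint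
  have hdiff : (G.edgeSet \ ↑C).ncard = N.card + N'.card := by
    rw [h.edgeSet_diff, ← Finset.coe_union, Set.ncard_coe_finset,
      Finset.card_union_of_disjoint h.disjoint]
  have hadd := Set.ncard_sdiff_add_ncard_of_subset h.core.1
  rw [Set.ncard_coe_finset] at hadd
  lia

theorem union_eq_of_card_add_card_eq_gLam (h : IsMatchingSplit G C N N')
    (hH : IsMatchingE G H) (hH' : IsMatchingE G H') (hd : Disjoint H H')
    (hcard : H.card + H'.card = gLam G) : (↑H ∪ ↑H' : Set (Sym2 V)) = G.edgeSet \ ↑C := by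
  classical
  have hsub : (↑H ∪ ↑H' : Set (Sym2 V)) ⊆ G.edgeSet := Set.union_subset hH.1 hH'.1
  obtain ⟨D, hD⟩ := (Set.toFinite (G.edgeSet \ (↑H ∪ ↑H'))).exists_finset_coe
  have hDcard : D.card ≤ C.card := by
    have hadd := Set.ncard_sdiff_add_ncard_of_subset hsub
    rw [← hD, ← Finset.coe_union, Set.ncard_coe_finset, Set.ncard_coe_finset,
      Finset.card_union_of_disjoint hd] at hadd
    have hle := h.ncard_edgeSet_le
    lia
  have hDcov (v : V) (hv : Covers C v) : Covers D v := by
    obtain ⟨e, he, hve, heH, heH'⟩ := hH.exists_incident_notMem hH' (h.three_le_fdeg v hv)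
    refine ⟨e, ?_, hve⟩
    rw [← Finset.mem_coe, hD]
    exact ⟨he, fun hmem => hmem.elim heH heH'⟩
  have hDE : ∀ e ∈ D, e ∈ G.edgeSet := fun e he => (hD.subset he).1
  have hDC : D = C := h.core.eq_of_covers_of_card_le hDcov hDcard fun e he =>
    h.mem_of_covers e (hDE e he)
  rw [← hDC, hD, Set.sdiff_sdiff_right_self, Set.inter_eq_self_of_subset_right hsub]

end IsMatchingSplit

/-- A graph homomorphism is a covering if it is a bijection on the neighbourhood of every vertex. -/
def IsCovering {V W : Type*} {F : SimpleGraph V} {G : SimpleGraph W} (p : F →g G) : Prop :=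
  ∀ v, Set.BijOn p (F.neighborSet v) (G.neighborSet (p v))

lemma exists_isCovering {V W : Type*} {F : SimpleGraph V} {G : SimpleGraph W}
    (h : ∀ c : F.ConnectedComponent, Nonempty (F.induce c.supp ≃g G)) :
    ∃ p : F →g G, IsCovering p := by
  let φ (c : F.ConnectedComponent) : F.induce c.supp ≃g G := (h c).some
  let p (v : V) : W := φ (F.connectedComponentMk v) ⟨v, rfl⟩
  have hp (c : F.ConnectedComponent) (x : c.supp) : p x = φ c x := by
    obtain ⟨v, rfl⟩ := x
    rfl
  have hpadj {v w : V} (hvw : F.Adj v w) : p w = φ (F.connectedComponentMk v)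
      ⟨w, (ConnectedComponent.connectedComponentMk_eq_of_adj hvw).symm⟩ := hp _ ⟨w, _⟩
  have hmap {v w : V} (hvw : F.Adj v w) : G.Adj (p v) (p w) := by
    rw [hpadj hvw]
    exact (φ _).map_adj_iff.2 hvw
  refine ⟨⟨p, hmap⟩, fun v => ⟨fun w => hmap, fun w hw x hx hwx => ?_, fun y hy => ?_⟩⟩
  · change p w = p x at hwx
    rw [hpadj hw, hpadj hx] at hwx
    exact congrArg Subtype.val ((φ _).injective hwx)
  · obtain ⟨x, rfl⟩ := (φ (F.connectedComponentMk v)).surjective y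
    exact ⟨x, (φ _).map_adj_iff.1 hy, hp _ x⟩

/-- The edges of `F` that a homomorphism `p : F →g G` sends into `M`. -/
noncomputable def edgePullback {V W : Type*} [Finite V] {F : SimpleGraph V} {G : SimpleGraph W}
    (p : F →g G) (M : Finset (Sym2 W)) : Finset (Sym2 V) :=
  (Set.toFinite (F.edgeSet ∩ Sym2.map p ⁻¹' ↑M)).toFinset

section EdgePullback

variable {V W : Type*} [Finite V] {F : SimpleGraph V} {G : SimpleGraph W} {p : F →g G}

lemma mem_edgePullback {M : Finset (Sym2 W)} {e : Sym2 V} :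
    e ∈ edgePullback p M ↔ e ∈ F.edgeSet ∧ e.map p ∈ M :=
  Set.Finite.mem_toFinset _

lemma edgeSet_diff_edgePullback (p : F →g G) (M : Finset (Sym2 W)) :
    F.edgeSet \ ↑(edgePullback p M) = F.edgeSet ∩ Sym2.map p ⁻¹' (G.edgeSet \ ↑M) := by
  ext e
  simp only [Set.mem_sdiff, Set.mem_inter_iff, Set.mem_preimage, Finset.mem_coe, mem_edgePullback]
  have := p.map_mem_edgeSet (e := e)
  tauto

lemma disjoint_edgePullback {M M' : Finset (Sym2 W)} (h : Disjoint M M') :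
    Disjoint (edgePullback p M) (edgePullback p M') :=
  Finset.disjoint_left.2 fun _ he he' =>
    Finset.disjoint_left.1 h (mem_edgePullback.1 he).2 (mem_edgePullback.1 he').2

end EdgePullback

lemma mem_USet_union_LSet {V : Type*} {G : SimpleGraph V} {e : Sym2 V} :
    e ∈ USet G ∪ LSet G ↔ e ∈ G.edgeSet ∧ ∃ v ∈ e, fdeg G v = 1 ∨ fdeg G v = 2 := by
  simp only [USet, LSet, Set.mem_union, Set.mem_ofPred_eq, and_or_left, exists_or]
  grind

namespace IsCovering

variable {V W : Type*} {F : SimpleGraph V} {G : SimpleGraph W} {p : F →g G}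

lemma fdeg_apply (hp : IsCovering p) (v : V) : fdeg G (p v) = fdeg F v :=
  (hp v).ncard_eq.symm

lemma USet_union_LSet (hp : IsCovering p) :
    USet F ∪ LSet F = F.edgeSet ∩ Sym2.map p ⁻¹' (USet G ∪ LSet G) := by
  ext e
  simp only [mem_USet_union_LSet, Set.mem_inter_iff, Set.mem_preimage, Sym2.mem_map,
    exists_exists_and_eq_and, hp.fdeg_apply]
  exact and_congr_right fun he => (and_iff_right (p.map_mem_edgeSet he)).symm

variable [Finite V] {M : Finset (Sym2 W)}

lemma covers_edgePullback (hp : IsCovering p) (hM : ↑M ⊆ G.edgeSet) {v : V} :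
    Covers (edgePullback p M) v ↔ Covers M (p v) := by
  constructor
  · rintro ⟨e, he, hve⟩
    exact ⟨e.map p, (mem_edgePullback.1 he).2, Sym2.mem_map.2 ⟨v, hve, rfl⟩⟩
  · rintro ⟨e, he, y, rfl⟩
    obtain ⟨w, hvw, rfl⟩ := (hp v).surjOn (hM he)
    exact ⟨s(v, w), mem_edgePullback.2 ⟨hvw, he⟩, Sym2.mem_mk_left _ _⟩

lemma isMatchingE_edgePullback (hp : IsCovering p) (hM : IsMatchingE G M) :
    IsMatchingE F (edgePullback p M) := by
  refine ⟨fun e he => (mem_edgePullback.1 he).1, ?_⟩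
  rintro e he f hf hef v ⟨⟨w, rfl⟩, ⟨x, rfl⟩⟩
  obtain ⟨hw, hpw⟩ := mem_edgePullback.1 he
  obtain ⟨hx, hpx⟩ := mem_edgePullback.1 hf
  have hwx : p w = p x := hM.subsingleton_setOf_mk_mem (p v) hpw hpx
  exact hef (congrArg _ ((hp v).injOn hw hx hwx))

lemma isMatchingSplit_edgePullback (hp : IsCovering p) {C N N' : Finset (Sym2 W)}
    (h : IsMatchingSplit G C N N') :
    IsMatchingSplit F (edgePullback p C) (edgePullback p N) (edgePullback p N') where
  left := hp.isMatchingE_edgePullback h.left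
  right := hp.isMatchingE_edgePullback h.right
  disjoint := disjoint_edgePullback h.disjoint
  core := hp.isMatchingE_edgePullback h.core
  edgeSet_diff := by
    rw [edgeSet_diff_edgePullback, h.edgeSet_diff]
    ext e
    simp only [Set.mem_inter_iff, Set.mem_preimage, Set.mem_union, Finset.mem_coe,
      mem_edgePullback, and_or_left]
  mem_of_covers e he hcov := by
    refine mem_edgePullback.2 ⟨he, h.mem_of_covers _ (p.map_mem_edgeSet he) fun w hw => ?_⟩
    obtain ⟨v, hv, rfl⟩ := Sym2.mem_map.1 hw
    exact (hp.covers_edgePullback h.core.1).1 (hcov v hv)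
  three_le_fdeg v hv := by
    rw [← hp.fdeg_apply]
    exact h.three_le_fdeg _ ((hp.covers_edgePullback h.core.1).1 hv)

end IsCovering

namespace Spanner10

instance : DecidableRel Spanner10.Adj :=
  inferInstanceAs (DecidableRel (SimpleGraph.fromEdgeSet _).Adj)

lemma fdeg_eq_degree (v : Fin 10) : fdeg Spanner10 v = Spanner10.degree v :=
  Set.ncard_eq_toFinset_card' _

lemma isMatchingSplit : IsMatchingSplit Spanner10 {s(2, 7)}
    {s(0, 1), s(2, 3), s(5, 6), s(7, 8)} {s(1, 2), s(3, 4), s(6, 7), s(8, 9)} where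
  left := by decide
  right := by decide
  disjoint := by decide
  core := by decide
  edgeSet_diff := by
    ext e
    revert e
    decide
  mem_of_covers := by
    simp only [Covers]
    decide
  three_le_fdeg := by
    simp only [Covers, fdeg_eq_degree]
    decide

lemma USet_union_LSet :
    USet Spanner10 ∪ LSet Spanner10 =
      Spanner10.edgeSet \ ↑({s(2, 7)} : Finset (Sym2 (Fin 10))) := by
  ext e
  simp only [mem_USet_union_LSet, fdeg_eq_degree]
  revert e
  decide

end Spanner10

theorem stmt11_general {V : Type*} [Finite V] (F : SimpleGraph V) (hF : IsSForest F)
    (H H' : Finset (Sym2 V)) (hH : IsMatchingE F H) (hH' : IsMatchingE F H')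
    (hd : Disjoint H H') (hcard : H.card + H'.card = gLam F) :
    (↑H ∪ ↑H' : Set (Sym2 V)) = USet F ∪ LSet F := by
  obtain ⟨p, hp⟩ := exists_isCovering hF
  have hsplit := hp.isMatchingSplit_edgePullback Spanner10.isMatchingSplit
  rw [hsplit.union_eq_of_card_add_card_eq_gLam hH hH' hd hcard, edgeSet_diff_edgePullback,
    ← Spanner10.USet_union_LSet, ← hp.USet_union_LSet]

/-- for an S-forest `F` and `(H, H') ∈ M₂(F)`, one has
`H ∪ H' = U(F) ∪ L(F)`. -/
theorem stmt11 {V : Type*} [Fintype V] [DecidableEq V] (F : SimpleGraph V)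
    (hF : IsSForest F) (H H' : Finset (Sym2 V)) (h : InM2 F H H') :
    (↑H ∪ ↑H' : Set (Sym2 V)) = USet F ∪ LSet F := by
  obtain ⟨hH, hH', hd, hcard, -⟩ := h
  exact stmt11_general F hF H H' hH hH' hd hcard
end

section
/- Let G be a finite simple graph without isolated vertices such that β(G)/α(G) = 5/4 (i.e., 4·β(G) = 5·α(G)). Then G has a spanning subgraph F every connected component of which is isomorphic to the spanner, and the number of connected components of F equals β(G) − α(G). -/
open SimpleGraph

/-!
Let `M` be a maximum matching and `(H, H')` a pair in `M₂(G, M)`. If an `M`-edge meets a vertex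
missed by `H`, adding it to `H` in exchange for the edge of `H` at its other end preserves `|H|`, so
by the choice of the pair the edge lies in `H'`; likewise with `H` and `H'` interchanged. From each
vertex missed by `H` follow `H'` and `H` alternately. Such a walk cannot stop after an odd number of
steps, since swapping `H` and `H'` along it would enlarge `H`, and distinct walks are disjoint.

Let `L` be the set of starts of walks with at least four edges. A vertex covered by `M` but not by
`H` either lies in `L` or starts a walk with two edges, whose end is covered by `H` but not by `M`.
Counting covered vertices, `2β ≤ |L| + 2α`, while the first four edges of the long walks give
`4|L| ≤ 2|H'| ≤ 2α`. If `4β = 5α`, then equality holds throughout: `H ∪ H'` is a disjoint union of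
`|L|` paths with five vertices each, `M` contains their end edges, and hence `M` matches their
middle vertices with one another, gluing the paths in pairs to spanners. A vertex outside the paths
would have a neighbour on one of them; replacing one or two edges would then leave an edge of one
matching that meets no edge of the other, which the maximality of `|H| + |H'|` and `|H|` forbids.
-/

/-! ### Disjoint copies of the spanner -/

section Forest

variable {V B W : Type*} {F G : SimpleGraph V} {T : SimpleGraph W}

theorem preconnected_spanner10 : Spanner10.Preconnected := by
  let parent : Fin 10 → Fin 10 := ![1, 2, 2, 2, 3, 6, 7, 2, 7, 8]
  have hadj : ∀ i, i ≠ 2 → Spanner10.Adj i (parent i) := by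
    simp only [Spanner10, fromEdgeSet_adj]
    decide
  have hroot : ∀ i, parent (parent (parent i)) = 2 := by decide
  have hparent (i : Fin 10) : Spanner10.Reachable i (parent i) := by
    by_cases hi : i = 2
    · exact hi ▸ .rfl
    · exact (hadj i hi).reachable
  have hreach (i : Fin 10) : Spanner10.Reachable i 2 :=
    hroot i ▸ (hparent i).trans ((hparent _).trans (hparent _))
  exact fun i j ↦ (hreach i).trans (hreach j).symm

theorem reachable_iff_of_iso_bot_boxProd (hT : T.Preconnected)
    (φ : F ≃g (⊥ : SimpleGraph B) □ T) {x y : V} : F.Reachable x y ↔ (φ x).1 = (φ y).1 := by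
  rw [← φ.reachable_iff, reachable_boxProd, reachable_bot, and_iff_left (hT _ _)]

theorem nonempty_induce_supp_iso (hT : T.Preconnected) (φ : F ≃g (⊥ : SimpleGraph B) □ T)
    (c : F.ConnectedComponent) : Nonempty (F.induce c.supp ≃g T) := by
  induction c using ConnectedComponent.ind with | _ x
  have hmem {y : V} : y ∈ (F.connectedComponentMk x).supp ↔ (φ y).1 = (φ x).1 := by
    rw [ConnectedComponent.mem_supp_iff, ConnectedComponent.eq,
      reachable_iff_of_iso_bot_boxProd hT φ]
  refine ⟨⟨⟨fun y ↦ (φ y).2, fun t ↦ ⟨φ.symm ((φ x).1, t), hmem.2 (by simp)⟩, ?_, ?_⟩, ?_⟩⟩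
  · rintro ⟨y, hy⟩
    simp [← hmem.1 hy]
  · intro t
    simp
  · rintro ⟨y, hy⟩ ⟨z, hz⟩
    simp [← φ.map_adj_iff, boxProd_adj, hmem.1 hy, hmem.1 hz]

theorem card_connectedComponent_of_iso (hT : T.Connected) (φ : F ≃g (⊥ : SimpleGraph B) □ T) :
    Nat.card F.ConnectedComponent = Nat.card B := by
  obtain ⟨t⟩ := hT.nonempty
  have hmk {x y : V} : F.connectedComponentMk x = F.connectedComponentMk y ↔ (φ x).1 = (φ y).1 := by
    rw [ConnectedComponent.eq, reachable_iff_of_iso_bot_boxProd hT.preconnected φ]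
  let rep (b : B) : F.ConnectedComponent := F.connectedComponentMk (φ.symm (b, t))
  have hrep : Function.Bijective rep := by
    refine ⟨fun b b' heq ↦ by simpa using hmk.1 heq, ConnectedComponent.ind fun x ↦ ?_⟩
    exact ⟨(φ x).1, hmk.2 (by simp)⟩
  exact (Nat.card_congr (.ofBijective rep hrep)).symm

theorem exists_isSForest_of_equiv (e : B × Fin 10 ≃ V)
    (he : ∀ b, Spanner10 ≤ G.comap fun i ↦ e (b, i)) :
    ∃ F ≤ G, IsSForest F ∧ 10 * Nat.card F.ConnectedComponent = Nat.card V := by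
  let φ := Iso.map e ((⊥ : SimpleGraph B) □ Spanner10)
  refine ⟨_, ?_, nonempty_induce_supp_iso preconnected_spanner10 φ.symm, ?_⟩
  · refine (map_le_iff_le_comap e.toEmbedding _ _).2 ?_
    rintro ⟨b, i⟩ ⟨_, j⟩ hij
    obtain ⟨⟨⟩, -⟩ | ⟨hij, rfl⟩ := boxProd_adj.1 hij
    exact he b hij
  · rw [card_connectedComponent_of_iso ⟨preconnected_spanner10⟩ φ.symm, ← Nat.card_congr e,
      Nat.card_prod, Nat.card_fin, mul_comm]

-- One representative of each pair is singled out by a linear order.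
theorem exists_equiv_prod_fin_two {A : Type*} {σ : A → A} (hσ : Function.Involutive σ)
    (hfix : ∀ a, σ a ≠ a) :
    ∃ (B : Set A) (e : B × Fin 2 ≃ A), ∀ b, σ (e (b, 0)) = e (b, 1) := by
  obtain ⟨_, -⟩ := exists_wellFoundedLT A
  let B : Set A := {a | a < σ a}
  let f (p : B × Fin 2) : A := if p.2 = 0 then p.1 else σ p.1
  have hf : Function.Bijective f := by
    constructor
    · rintro ⟨⟨a, ha⟩, i⟩ ⟨⟨b, hb⟩, j⟩ heq
      have := hσ a
      have := hσ b
      grind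
    · intro a
      obtain hlt | hgt := (hfix a).symm.lt_or_gt
      · exact ⟨(⟨a, hlt⟩, 0), rfl⟩
      · exact ⟨(⟨σ a, by simpa [B, hσ a] using hgt⟩, 1), hσ a⟩
  exact ⟨B, .ofBijective f hf, fun b ↦ rfl⟩

theorem exists_isSForest_of_paths {A : Type*} {q : A × Fin 5 → V} (hq : Function.Bijective q)
    (hpath : ∀ a, ∀ i : Fin 4, G.Adj (q (a, i.castSucc)) (q (a, i.succ)))
    {σ : A → A} (hσ : Function.Involutive σ) (hmid : ∀ a, G.Adj (q (a, 2)) (q (σ a, 2))) :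
    ∃ F ≤ G, IsSForest F ∧ 10 * Nat.card F.ConnectedComponent = Nat.card V := by
  obtain ⟨B, e, he⟩ := exists_equiv_prod_fin_two hσ fun a ha ↦ (hmid a).ne (by rw [ha])
  let e' : B × Fin 10 ≃ V :=
    calc B × Fin 10
      _ ≃ B × (Fin 2 × Fin 5) := Equiv.prodCongr (.refl B) (finProdFinEquiv (m := 2) (n := 5)).symm
      _ ≃ (B × Fin 2) × Fin 5 := (Equiv.prodAssoc B (Fin 2) (Fin 5)).symm
      _ ≃ A × Fin 5 := Equiv.prodCongr e (.refl _)
      _ ≃ V := .ofBijective q hq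
  refine exists_isSForest_of_equiv e' fun b ↦ ?_
  have h₀ := hpath (e (b, 0))
  have h₁ := hpath (e (b, 1))
  have h₂ := he b ▸ hmid (e (b, 0))
  rw [Spanner10, fromEdgeSet_le]
  refine Set.sdiff_subset.trans ?_
  simp only [Set.insert_subset_iff, Set.singleton_subset_iff, mem_edgeSet, comap_adj]
  exact ⟨h₀ 0, h₀ 1, h₀ 2, h₀ 3, h₁ 0, h₁ 1, h₁ 2, h₁ 3, h₂⟩

end Forest

/-! ### Matchings as involutions -/

section
open Finset

variable {V : Type*} {G : SimpleGraph V}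

/-- A matching of `G`, encoded as the involution of `V` that exchanges the two ends of each of its
edges and fixes the vertices it does not cover. In this form, augmenting and swapping matchings are
redefinitions of a function. -/
structure PartnerMap (G : SimpleGraph V) where
  /-- The partner of a vertex, or the vertex itself if it is not covered. -/
  toFun : V → V
  involutive' : Function.Involutive toFun
  adj' : ∀ v, toFun v ≠ v → G.Adj v (toFun v)

namespace PartnerMap

instance : FunLike (PartnerMap G) V V where
  coe := toFun
  coe_injective h k e := by cases h; cases k; congr

@[simp]
theorem apply_apply (m : PartnerMap G) (v : V) : m (m v) = v := m.involutive' v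

theorem adj (m : PartnerMap G) {v : V} (hv : m v ≠ v) : G.Adj v (m v) := m.adj' v hv

/-- Two matchings are edge-disjoint: a vertex with the same partner in both is covered by neither.
-/
def EdgeDisjoint (h k : PartnerMap G) : Prop := ∀ v, h v = k v → h v = v

theorem EdgeDisjoint.symm {h k : PartnerMap G} (hd : EdgeDisjoint h k) : EdgeDisjoint k h :=
  fun v e ↦ e.trans (hd v e.symm)

/-- Replace the partners of the vertices in `S` under `h` by those under `k`, where `S` is closed
under both matchings. -/
def splice (h k : PartnerMap G) (S : Finset V) [DecidablePred (· ∈ S)]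
    (hS : ∀ x ∈ S, h x ∈ S) (kS : ∀ x ∈ S, k x ∈ S) : PartnerMap G where
  toFun x := if x ∈ S then k x else h x
  involutive' x := by
    have := hS (h x)
    have := kS x
    grind [apply_apply]
  adj' x := by
    have := h.adj (v := x)
    have := k.adj (v := x)
    grind

section Optimal

variable [DecidableEq V]

/-- Add the edge `uv` to the matching `h`, deleting the edges of `h` at `u` and at `v`. -/
def link (h : PartnerMap G) {u v : V} (huv : G.Adj u v) : PartnerMap G where
  toFun x := if x = u then v else if x = v then u else if h x = u ∨ h x = v then x else h x
  involutive' x := by grind [apply_apply]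
  adj' x := by
    have := h.adj (v := x)
    have := huv.symm
    grind

theorem link_apply (h : PartnerMap G) {u v : V} (huv : G.Adj u v) (x : V) :
    h.link huv x =
      if x = u then v else if x = v then u else if h x = u ∨ h x = v then x else h x := rfl

theorem EdgeDisjoint.link {h k : PartnerMap G} (hd : EdgeDisjoint h k) {u v : V} (huv : G.Adj u v)
    (hk : k u ≠ v) : EdgeDisjoint (h.link huv) k := by
  intro x
  have := hd x
  have := k.apply_apply
  grind [link_apply]

variable [Fintype V]

/-- The set of vertices covered by a matching. -/
def support (m : PartnerMap G) : Finset V := {v | m v ≠ v}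

@[simp]
theorem mem_support {m : PartnerMap G} {v : V} : v ∈ m.support ↔ m v ≠ v := by simp [support]

/-- The edge set of a matching. -/
def edges (m : PartnerMap G) : Finset (Sym2 V) := m.support.image fun v ↦ s(v, m v)

theorem mk_mem_edges {m : PartnerMap G} {u v : V} : s(u, v) ∈ m.edges ↔ u ≠ v ∧ m u = v := by
  simp only [edges, mem_image, mem_support, Sym2.eq_iff]
  grind [apply_apply]

theorem isMatchingE_edges (m : PartnerMap G) : IsMatchingE G m.edges := by
  constructor
  · intro e he
    obtain ⟨v, hv, rfl⟩ := mem_image.1 he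
    exact m.adj (mem_support.1 hv)
  · rintro e he f hf hne v ⟨⟨u, rfl⟩, ⟨w, rfl⟩⟩
    rw [mk_mem_edges] at he hf
    exact hne (by rw [← he.2, ← hf.2])

theorem _root_.IsMatchingE.exists_edges_eq {M : Finset (Sym2 V)} (hM : IsMatchingE G M) :
    ∃ m : PartnerMap G, m.edges = M := by
  have hadj {u v : V} (h : s(u, v) ∈ M) : G.Adj u v := hM.1 h
  have hpartner (u : V) : ∃ w, ∀ v, s(u, v) ∈ M ↔ u ≠ v ∧ w = v := by
    by_cases hu : ∃ w, s(u, w) ∈ M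
    · obtain ⟨w, hw⟩ := hu
      refine ⟨w, fun v ↦ ⟨fun hv ↦ ⟨(hadj hv).ne, ?_⟩, by rintro ⟨-, rfl⟩; exact hw⟩⟩
      by_contra hne
      exact hM.2 _ hw _ hv (by grind) u ⟨by simp, by simp⟩
    · exact ⟨u, fun v ↦ ⟨fun hv ↦ (hu ⟨v, hv⟩).elim, fun hv ↦ (hv.1 hv.2).elim⟩⟩
  choose m hm using hpartner
  have hmem {u : V} (hu : m u ≠ u) : s(u, m u) ∈ M := (hm u _).2 ⟨hu.symm, rfl⟩
  refine ⟨⟨m, fun u ↦ ?_, fun u hu ↦ hadj (hmem hu)⟩, ?_⟩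
  · by_cases hu : m u = u
    · rw [hu, hu]
    · exact ((hm (m u) u).1 (Sym2.eq_swap ▸ hmem hu)).2
  · ext ⟨u, v⟩
    exact mk_mem_edges.trans (hm u v).symm

theorem card_support (m : PartnerMap G) : #m.support = 2 * #m.edges := by
  have hunion : m.support = m.edges.biUnion Sym2.toFinset := by
    ext v
    simp only [mem_support, mem_biUnion, Sym2.mem_toFinset]
    constructor
    · exact fun hv ↦ ⟨s(v, m v), mk_mem_edges.2 ⟨hv.symm, rfl⟩, Sym2.mem_mk_left _ _⟩
    · rintro ⟨_, he, w, rfl⟩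
      rw [mk_mem_edges] at he
      exact he.2 ▸ he.1.symm
  obtain ⟨hG, hdisj⟩ := m.isMatchingE_edges
  rw [hunion, card_biUnion, sum_const_nat (m := 2), mul_comm]
  · exact fun e he ↦ Sym2.card_toFinset_of_not_isDiag _ (G.not_isDiag_of_mem_edgeSet (hG he))
  · exact fun e he f hf hne ↦ Finset.disjoint_left.2 fun v hv hv' ↦
      hdisj e he f hf hne v ⟨Sym2.mem_toFinset.1 hv, Sym2.mem_toFinset.1 hv'⟩

theorem disjoint_edges {h k : PartnerMap G} : Disjoint h.edges k.edges ↔ EdgeDisjoint h k := by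
  rw [Finset.disjoint_left]
  constructor
  · intro hd v hv
    by_contra hne
    exact hd (mk_mem_edges.2 ⟨Ne.symm hne, rfl⟩) (mk_mem_edges.2 ⟨Ne.symm hne, hv.symm⟩)
  · rintro hd ⟨u, v⟩ hh hk
    obtain ⟨hne, rfl⟩ := mk_mem_edges.1 hh
    exact hne (hd u (mk_mem_edges.1 hk).2.symm).symm

theorem support_link (h : PartnerMap G) {u v : V} (huv : G.Adj u v) (hu : h u = u) :
    (h.link huv).support = insert u (insert v (h.support.erase (h v))) := by
  ext x
  have := huv.ne
  simp only [mem_support, mem_insert, mem_erase, link_apply]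
  grind [apply_apply]

theorem card_support_link (h : PartnerMap G) {u v : V} (huv : G.Adj u v) (hu : h u = u) :
    #(h.link huv).support = #h.support + if h v = v then 2 else 0 := by
  have := huv.ne
  have := h.apply_apply
  rw [support_link h huv hu, card_insert_of_notMem (by simp; grind)]
  split_ifs with hv
  · rw [card_insert_of_notMem (by simp; grind), erase_eq_of_notMem (by simp; grind)]
  · rw [insert_eq_of_mem (by simp; grind), card_erase_of_mem (by simp; grind)]
    have : 0 < #h.support := card_pos.2 ⟨v, by simpa using hv⟩
    omega

/-! ### Optimal pairs of matchings -/

/-- `(h, h')` is a pair in `M₂(G)`: an edge-disjoint pair of matchings with `|h| + |h'|` maximum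
and, subject to this, `|h|` maximum. Sizes are counted by covered vertices. -/
structure IsOptimalPair (h h' : PartnerMap G) : Prop where
  edgeDisjoint : EdgeDisjoint h h'
  card_add_card_le : ∀ k k' : PartnerMap G, EdgeDisjoint k k' →
    #k.support + #k'.support ≤ #h.support + #h'.support
  card_le : ∀ k k' : PartnerMap G, EdgeDisjoint k k' →
    #k.support + #k'.support = #h.support + #h'.support → #k.support ≤ #h.support

theorem exists_card_support_eq_gBeta (G : SimpleGraph V) :
    ∃ m : PartnerMap G, #m.support = 2 * gBeta G := by
  have hne : {n | ∃ M : Finset (Sym2 V), IsMatchingE G M ∧ #M = n}.Nonempty :=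
    ⟨0, ∅, ⟨by simp, by simp⟩, rfl⟩
  have hbdd : BddAbove {n | ∃ M : Finset (Sym2 V), IsMatchingE G M ∧ #M = n} :=
    ((Set.toFinite {M | IsMatchingE G M}).image card).bddAbove
  obtain ⟨M, hM, hcard⟩ := Nat.sSup_mem hne hbdd
  obtain ⟨m, rfl⟩ := hM.exists_edges_eq
  exact ⟨m, by rw [card_support, hcard, gBeta]⟩

theorem EdgeDisjoint.card_add_card_le_gLam {h k : PartnerMap G} (hd : EdgeDisjoint h k) :
    #h.edges + #k.edges ≤ gLam G := by
  refine le_csSup ⟨Fintype.card (Sym2 V) + Fintype.card (Sym2 V), ?_⟩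
    ⟨_, _, h.isMatchingE_edges, k.isMatchingE_edges, disjoint_edges.2 hd, rfl⟩
  rintro _ ⟨H, H', -, -, -, rfl⟩
  exact Nat.add_le_add (card_le_univ H) (card_le_univ H')

theorem EdgeDisjoint.card_le_gAlpha {h k : PartnerMap G} (hd : EdgeDisjoint h k)
    (hsum : #h.edges + #k.edges = gLam G) : #h.edges ≤ gAlpha G := by
  refine le_csSup ⟨Fintype.card (Sym2 V), ?_⟩
    ⟨_, _, h.isMatchingE_edges, k.isMatchingE_edges, disjoint_edges.2 hd, hsum, rfl⟩
  rintro _ ⟨H, H', -, -, -, -, rfl⟩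
  exact card_le_univ H

theorem exists_card_edges_eq_gAlpha (G : SimpleGraph V) : ∃ h k : PartnerMap G,
    EdgeDisjoint h k ∧ #h.edges + #k.edges = gLam G ∧ #h.edges = gAlpha G := by
  obtain ⟨H, H', hH, hH', hd, hsum⟩ : gLam G ∈ _ := by
    refine Nat.sSup_mem ⟨0, ∅, ∅, ⟨by simp, by simp⟩, ⟨by simp, by simp⟩, by simp, rfl⟩
      ⟨Fintype.card (Sym2 V) + Fintype.card (Sym2 V), ?_⟩
    rintro _ ⟨H, H', -, -, -, rfl⟩
    exact Nat.add_le_add (card_le_univ H) (card_le_univ H')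
  obtain ⟨K, K', hK, hK', hKd, hKsum, hcard⟩ : gAlpha G ∈ _ := by
    refine Nat.sSup_mem ⟨_, H, H', hH, hH', hd, hsum, rfl⟩ ⟨Fintype.card (Sym2 V), ?_⟩
    rintro _ ⟨H, H', -, -, -, -, rfl⟩
    exact card_le_univ H
  obtain ⟨h, rfl⟩ := hK.exists_edges_eq
  obtain ⟨k, rfl⟩ := hK'.exists_edges_eq
  exact ⟨h, k, disjoint_edges.1 hKd, hKsum, hcard⟩

theorem exists_isOptimalPair (G : SimpleGraph V) :
    ∃ h h' : PartnerMap G, IsOptimalPair h h' ∧ #h.support = 2 * gAlpha G := by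
  obtain ⟨h, h', hd, hsum, hcard⟩ := exists_card_edges_eq_gAlpha G
  refine ⟨h, h', ⟨hd, fun k k' hk ↦ ?_, fun k k' hk heq ↦ ?_⟩, by rw [card_support, hcard]⟩
  · have := hk.card_add_card_le_gLam
    simp only [card_support]
    omega
  · simp only [card_support] at heq ⊢
    have := hk.card_le_gAlpha (by omega)
    omega

section Exchange

variable {h h' k k' m : PartnerMap G} {u v : V}

namespace IsOptimalPair

theorem of_card_eq (ho : IsOptimalPair h h') (hd : EdgeDisjoint k k')
    (hk : #k.support = #h.support) (hk' : #k'.support = #h'.support) : IsOptimalPair k k' := by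
  refine ⟨hd, ?_, ?_⟩ <;> rw [hk, hk']
  exacts [ho.card_add_card_le, ho.card_le]

theorem card_snd_le (ho : IsOptimalPair h h') : #h'.support ≤ #h.support :=
  ho.card_le h' h ho.edgeDisjoint.symm (add_comm _ _)

theorem card_fst_eq (ho : IsOptimalPair h h') (hk : IsOptimalPair k k') :
    #h.support = #k.support := by
  have hsum := (hk.card_add_card_le h h' ho.edgeDisjoint).antisymm
    (ho.card_add_card_le k k' hk.edgeDisjoint)
  exact (hk.card_le h h' ho.edgeDisjoint hsum).antisymm
    (ho.card_le k k' hk.edgeDisjoint hsum.symm)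

theorem flip (ho : IsOptimalPair h h') (hcard : #h'.support = #h.support) : IsOptimalPair h' h :=
  ho.of_card_eq ho.edgeDisjoint.symm hcard hcard.symm

theorem link_fst (ho : IsOptimalPair h h') (hu : h u = u) (huv : G.Adj u v) (hne : h' u ≠ v) :
    h v ≠ v ∧ IsOptimalPair (h.link huv) h' := by
  have hd := ho.edgeDisjoint.link huv hne
  have hsum := ho.card_add_card_le _ _ hd
  have hcard := h.card_support_link huv hu
  split_ifs at hcard with hv
  · omega
  · exact ⟨hv, ho.of_card_eq hd hcard rfl⟩

theorem link_snd (ho : IsOptimalPair h h') (hu : h' u = u) (huv : G.Adj u v) (hne : h u ≠ v) :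
    h' v ≠ v ∧ IsOptimalPair h (h'.link huv) := by
  have hd := (ho.edgeDisjoint.symm.link huv hne).symm
  have hsum := ho.card_add_card_le _ _ hd
  have hcard := h'.card_support_link huv hu
  split_ifs at hcard with hv
  · omega
  · exact ⟨hv, ho.of_card_eq hd rfl hcard⟩

-- Otherwise exchanging `h` and `h'` on `S` would enlarge `h` without changing `|h| + |h'|`.
theorem apply_ne_of_closed (ho : IsOptimalPair h h') {S : Finset V} (hS : ∀ x ∈ S, h x ∈ S)
    (hS' : ∀ x ∈ S, h' x ∈ S) (hcov : ∀ x ∈ S, h' x ≠ x) : ∀ x ∈ S, h x ≠ x := by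
  intro y hy hyy
  let k := h.splice h' S hS hS'
  let k' := h'.splice h S hS' hS
  have hk (x : V) : k x = if x ∈ S then h' x else h x := rfl
  have hk' (x : V) : k' x = if x ∈ S then h x else h' x := rfl
  have hd : EdgeDisjoint k k' := by
    intro x
    have := ho.edgeDisjoint x
    grind
  have hsum : #k.support + #k'.support = #h.support + #h'.support := by
    simp only [support, card_filter, ← sum_add_distrib]
    refine sum_congr rfl fun x _ ↦ ?_
    by_cases hx : x ∈ S
    · simp only [hk, hk', hx, if_true, add_comm]
    · simp only [hk, hk', hx, if_false]
  have hlt : #h.support < #k.support := by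
    refine card_lt_card ((ssubset_iff_of_subset fun x hx ↦ ?_).2
      ⟨y, by simp only [mem_support]; grind, by simpa using hyy⟩)
    simp only [mem_support] at hx ⊢
    grind
  exact (ho.card_le k k' hd hsum).not_gt hlt

theorem apply_ne_or_apply_ne (ho : IsOptimalPair h h') (hv : h' v ≠ v) :
    h v ≠ v ∨ h (h' v) ≠ h' v := by
  by_contra! hfix
  refine ho.apply_ne_of_closed (S := {v, h' v}) ?_ ?_ ?_ v (by simp) hfix.1 <;>
  · intro x
    simp only [mem_insert, mem_singleton]
    grind [apply_apply]

-- Replace the `h`-edge `y (h y)` by `u y`; then the `h'`-edge at `h y` must still meet `h`.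
theorem apply_ne_of_adj (ho : IsOptimalPair h h') {y : V} (hu : h u = u) (huy : G.Adj u y)
    (hy : h' u ≠ y) (hhy : h' u ≠ h y) (hfix : h' (h y) ≠ h y) :
    h (h' (h y)) ≠ h' (h y) := by
  obtain ⟨hyy, hlink⟩ := ho.link_fst hu huy hy
  have := hlink.apply_ne_or_apply_ne hfix
  have := h.apply_apply
  have := h'.apply_apply
  grind [link_apply]

-- Replace the `h`-edge `a (h a)` by `u a`, which frees `h a` to take the role of `u` in
-- `apply_ne_of_adj`.
theorem apply_ne_of_adj_of_adj (ho : IsOptimalPair h h') {a b : V} (hu : h u = u) (hu' : h' u = u)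
    (hua : G.Adj u a) (hab : G.Adj (h a) b) (hne : a ≠ b) (h₁ : h' (h a) ≠ b)
    (h₂ : h' (h a) ≠ h b) (hfix : h' (h b) ≠ h b) : h (h' (h b)) ≠ h' (h b) := by
  obtain ⟨haa, hlink⟩ := ho.link_fst hu hua (hu'.trans_ne hua.ne)
  have hbl : h.link hua b = h b := by
    have := hab.ne
    have := h.apply_apply
    grind [link_apply]
  have hal : h.link hua (h a) = h a := by
    have := h.apply_apply
    grind [link_apply]
  have := hlink.apply_ne_of_adj hal hab h₁ (hbl ▸ h₂) (hbl ▸ hfix)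
  have := h.apply_apply
  have := h'.apply_apply
  grind [link_apply]

end IsOptimalPair

/-- The vertices whose `m`-edge belongs to `h` or to `h'`; there are `2|M ∩ (H ∪ H')|` of them. -/
def agreement (m h h' : PartnerMap G) : Finset V := {v | m v ≠ v ∧ (m v = h v ∨ m v = h' v)}

@[simp]
theorem mem_agreement : v ∈ agreement m h h' ↔ m v ≠ v ∧ (m v = h v ∨ m v = h' v) := by
  simp [agreement]

theorem agreement_comm : agreement m h h' = agreement m h' h := by
  ext
  simp [or_comm]

theorem card_agreement_lt (hv : m v ≠ v) (hh : h v = v) (hne : m v ≠ h' v) :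
    #(agreement m h h') < #(agreement m (h.link (m.adj hv)) h') := by
  have := h.apply_apply
  have := m.apply_apply
  refine card_lt_card ((ssubset_iff_of_subset fun x hx ↦ ?_).2 ⟨v, ?_, ?_⟩)
  · simp only [mem_agreement, link_apply] at hx ⊢
    grind
  · simp [link_apply, hv]
  · simp [hh, hv, hne]

/-- `(h, h')` is a pair in `M₂(G, M)`, where `m` encodes `M`: an optimal pair with the largest
agreement with `m`. -/
structure IsOptimalFor (m h h' : PartnerMap G) : Prop extends IsOptimalPair h h' where
  card_agreement_le : ∀ k k' : PartnerMap G, IsOptimalPair k k' →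
    #(agreement m k k') ≤ #(agreement m h h')

theorem exists_isOptimalFor (m : PartnerMap G) :
    ∃ h h' : PartnerMap G, IsOptimalFor m h h' ∧ #h.support = 2 * gAlpha G := by
  obtain ⟨k, k', hk, hcard⟩ := exists_isOptimalPair G
  have : Finite (PartnerMap G) := DFunLike.finite _
  obtain ⟨⟨h, h'⟩, ho, hmax⟩ := Set.exists_max_image
    {p : PartnerMap G × PartnerMap G | IsOptimalPair p.1 p.2}
    (fun p ↦ #(agreement m p.1 p.2)) (Set.toFinite _) ⟨(k, k'), hk⟩
  exact ⟨h, h', ⟨ho, fun k k' hk ↦ hmax (k, k') hk⟩, (ho.card_fst_eq hk).trans hcard⟩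

namespace IsOptimalFor

theorem apply_eq_snd (ho : IsOptimalFor m h h') (hv : m v ≠ v) (hh : h v = v) : m v = h' v := by
  by_contra hne
  have hlink := (ho.link_fst hh (m.adj hv) (Ne.symm hne)).2
  exact (ho.card_agreement_le _ _ hlink).not_gt (card_agreement_lt hv hh hne)

theorem apply_eq_fst (ho : IsOptimalFor m h h') (hv : m v ≠ v) (hh : h' v = v) : m v = h v := by
  by_contra hne
  have hlink := (ho.link_snd hh (m.adj hv) (Ne.symm hne)).2
  have hlt := card_agreement_lt hv hh hne
  rw [agreement_comm (h := h'), agreement_comm (h := h'.link _)] at hlt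
  exact (ho.card_agreement_le _ _ hlink).not_gt hlt

end IsOptimalFor

end Exchange

end Optimal

/-! ### Alternating paths -/

/-- The walk from `v` that follows the matchings `h'` and `h` alternately, starting with `h'`; it
stalls at a vertex not covered by the matching whose turn it is. -/
def altWalk (h h' : PartnerMap G) (v : V) : ℕ → V
  | 0 => v
  | n + 1 => if Even n then h' (altWalk h h' v n) else h (altWalk h h' v n)

/-- The first `n` steps of the alternating walk from `v` form an `H'`-`H` alternating path starting
at a vertex `v` not covered by `h`. Only the absence of stalls is required; that the vertices are
distinct follows for optimal pairs (`IsOptimalPair.altWalk_inj`). -/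
structure IsAltPath (h h' : PartnerMap G) (v : V) (n : ℕ) : Prop where
  exposed : h v = v
  succ_ne : ∀ i < n, altWalk h h' v (i + 1) ≠ altWalk h h' v i

section AltWalk

variable {h h' : PartnerMap G} {v w : V} {i j n n' : ℕ}

theorem altWalk_succ_of_even (hn : Even n) :
    altWalk h h' v (n + 1) = h' (altWalk h h' v n) := if_pos hn

theorem altWalk_succ_of_odd (hn : Odd n) :
    altWalk h h' v (n + 1) = h (altWalk h h' v n) := if_neg (Nat.not_even_iff_odd.2 hn)

theorem apply_altWalk_succ_of_even (hn : Even n) :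
    h' (altWalk h h' v (n + 1)) = altWalk h h' v n := by
  rw [altWalk_succ_of_even hn, apply_apply]

theorem apply_altWalk_succ_of_odd (hn : Odd n) :
    h (altWalk h h' v (n + 1)) = altWalk h h' v n := by
  rw [altWalk_succ_of_odd hn, apply_apply]

namespace IsAltPath

theorem adj (hv : IsAltPath h h' v n) (hi : i < n) :
    G.Adj (altWalk h h' v i) (altWalk h h' v (i + 1)) := by
  have hne := hv.succ_ne i hi
  rcases i.even_or_odd with hi | hi
  · rw [altWalk_succ_of_even hi] at hne ⊢
    exact h'.adj hne
  · rw [altWalk_succ_of_odd hi] at hne ⊢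
    exact h.adj hne

theorem mono (hv : IsAltPath h h' v n) (hjn : j ≤ n) : IsAltPath h h' v j :=
  ⟨hv.exposed, fun i hi ↦ hv.succ_ne i (hi.trans_le hjn)⟩

theorem apply_fst_ne (hv : IsAltPath h h' v n) (hi₀ : 1 ≤ i) (hi : i ≤ n) (hin : i < n ∨ Even i) :
    h (altWalk h h' v i) ≠ altWalk h h' v i := by
  obtain hie | hio := i.even_or_odd
  · obtain ⟨i, rfl⟩ := Nat.exists_eq_add_one.2 hi₀
    have hodd : Odd i := by grind
    exact (apply_altWalk_succ_of_odd hodd).trans_ne (hv.succ_ne i hi).symm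
  · have hlt : i < n := hin.resolve_right (Nat.not_even_iff_odd.2 hio)
    exact (altWalk_succ_of_odd hio).symm.trans_ne (hv.succ_ne i hlt)

theorem apply_snd_ne (hv : IsAltPath h h' v n) (hi : i ≤ n) (hin : i < n ∨ Odd i) :
    h' (altWalk h h' v i) ≠ altWalk h h' v i := by
  obtain hie | hio := i.even_or_odd
  · have hlt : i < n := hin.resolve_right (Nat.not_odd_iff_even.2 hie)
    exact (altWalk_succ_of_even hie).symm.trans_ne (hv.succ_ne i hlt)
  · obtain ⟨i, rfl⟩ := Nat.exists_eq_add_one.2 hio.pos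
    have heven : Even i := by grind
    exact (apply_altWalk_succ_of_even heven).trans_ne (hv.succ_ne i hi).symm

theorem ne_altWalk_of_even (hv : h v = v) (hw : IsAltPath h h' w n) (hj : j + 1 ≤ n)
    (hodd : Odd j) : v ≠ altWalk h h' w (j + 1) := by
  rintro rfl
  exact hw.succ_ne j hj (hv.symm.trans (apply_altWalk_succ_of_odd hodd))

theorem eq_and_eq_of_even_iff_even (hv : IsAltPath h h' v n) (hw : IsAltPath h h' w n')
    (hi : i ≤ n) (hj : j ≤ n') (hij : Even i ↔ Even j)
    (heq : altWalk h h' v i = altWalk h h' w j) : v = w ∧ i = j := by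
  induction i generalizing j with
  | zero =>
    cases j with
    | zero => exact ⟨heq, rfl⟩
    | succ j => exact (ne_altWalk_of_even hv.exposed hw hj (by grind) heq).elim
  | succ i ih =>
    cases j with
    | zero => exact (ne_altWalk_of_even hw.exposed hv hi (by grind) heq.symm).elim
    | succ j =>
      have hij : Even i ↔ Even j := by grind
      suffices altWalk h h' v i = altWalk h h' w j by
        simpa using ih (by omega) (by omega) hij this
      rcases i.even_or_odd with he | ho
      · simpa only [apply_altWalk_succ_of_even, he, hij.1 he] using congrArg h' heq
      · have hoj : Odd j := by grind
        simpa only [apply_altWalk_succ_of_odd, ho, hoj] using congrArg h heq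

end IsAltPath

variable [DecidableEq V] [Fintype V]

namespace IsOptimalPair

-- If the walk stalled after an odd number of steps, its vertex set would be closed under `h` and
-- `h'` and covered by `h'`, but `h` misses `v`.
theorem isAltPath_succ (ho : IsOptimalPair h h') (hv : IsAltPath h h' v n) (hn : Odd n) :
    IsAltPath h h' v (n + 1) := by
  refine ⟨hv.exposed, fun i hi ↦ ?_⟩
  obtain hi | rfl := Nat.lt_succ_iff_lt_or_eq.1 hi
  · exact hv.succ_ne i hi
  intro hstall
  let S := (range (i + 1)).image (altWalk h h' v)
  have hmem {j : ℕ} (hj : j ≤ i) : altWalk h h' v j ∈ S :=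
    mem_image_of_mem _ (mem_range.2 (by omega))
  have hS : ∀ x ∈ S, h x ∈ S := by
    simp only [S, forall_mem_image, mem_range]
    rintro j hj
    obtain rfl | hji := eq_or_ne j i
    · exact altWalk_succ_of_odd hn ▸ hstall ▸ hmem le_rfl
    obtain hj' | hj' := j.even_or_odd
    · cases j with
      | zero => exact hv.exposed.symm ▸ hmem (Nat.zero_le i)
      | succ j =>
        have hodd : Odd j := by grind
        exact (apply_altWalk_succ_of_odd hodd).symm ▸ hmem (by omega)
    · exact altWalk_succ_of_odd hj' ▸ hmem (by omega)
  have hS' (x : V) (hx : x ∈ S) : h' x ∈ S ∧ h' x ≠ x := by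
    obtain ⟨j, hj, rfl⟩ := mem_image.1 hx
    rw [mem_range] at hj
    obtain hj' | hj' := j.even_or_odd
    · have hji : j < i := by grind
      exact altWalk_succ_of_even (h := h) hj' ▸ ⟨hmem hji, hv.succ_ne j hji⟩
    · obtain ⟨j, rfl⟩ := Nat.exists_eq_add_one.2 hj'.pos
      have heven : Even j := by grind
      exact (apply_altWalk_succ_of_even heven).symm ▸
        ⟨hmem (by omega), (hv.succ_ne j (by omega)).symm⟩
  exact ho.apply_ne_of_closed hS (fun x hx ↦ (hS' x hx).1) (fun x hx ↦ (hS' x hx).2) v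
    (hmem (Nat.zero_le i)) hv.exposed

-- Otherwise the path from `w` would run back along the path from `v` and end at `v`, which `h`
-- misses, after an odd number of steps.
theorem altWalk_ne_of_even_of_odd (ho : IsOptimalPair h h') (hv : IsAltPath h h' v n)
    (hw : IsAltPath h h' w n') (hi : i ≤ n) (hj : j ≤ n') (hie : Even i) (hjo : Odd j) :
    altWalk h h' v i ≠ altWalk h h' w j := by
  obtain ⟨i, rfl⟩ := hie.exists_two_nsmul
  rw [nsmul_eq_mul, Nat.cast_two] at *
  induction i generalizing j n' with
  | zero =>
    rintro (heq : v = _)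
    have hstep := (ho.isAltPath_succ (hw.mono hj) hjo).succ_ne j j.lt_succ_self
    rw [altWalk_succ_of_odd hjo, ← heq] at hstep
    exact hstep hv.exposed
  | succ i ih =>
    intro heq
    have hw₁ := ho.isAltPath_succ (hw.mono hj) hjo
    have heq₁ : altWalk h h' w (j + 1) = altWalk h h' v (2 * i + 1) := by
      rw [altWalk_succ_of_odd hjo, ← heq]
      exact apply_altWalk_succ_of_odd (odd_two_mul_add_one i)
    have heq₂ : altWalk h h' w (j + 2) = altWalk h h' v (2 * i) := by
      rw [altWalk_succ_of_even hjo.add_one, heq₁, apply_altWalk_succ_of_even (even_two_mul i)]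
    have hw₂ : IsAltPath h h' w (j + 2) := by
      refine ⟨hw.exposed, fun l hl ↦ ?_⟩
      obtain hl | rfl := Nat.lt_succ_iff_lt_or_eq.1 hl
      · exact hw₁.succ_ne l hl
      · exact heq₂ ▸ heq₁ ▸ (hv.succ_ne (2 * i) (by omega)).symm
    exact ih hw₂ le_rfl (by grind) (by omega) (even_two_mul i) heq₂.symm

theorem altWalk_inj (ho : IsOptimalPair h h') (hv : IsAltPath h h' v n)
    (hw : IsAltPath h h' w n') (hi : i ≤ n) (hj : j ≤ n') :
    altWalk h h' v i = altWalk h h' w j ↔ v = w ∧ i = j := by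
  refine ⟨fun heq ↦ ?_, by rintro ⟨rfl, rfl⟩; rfl⟩
  by_cases hij : Even i ↔ Even j
  · exact hv.eq_and_eq_of_even_iff_even hw hi hj hij heq
  · obtain hie | hio := i.even_or_odd
    · exact (ho.altWalk_ne_of_even_of_odd hv hw hi hj hie (by grind) heq).elim
    · exact (ho.altWalk_ne_of_even_of_odd hw hv hj hi (by grind) hio heq.symm).elim

end IsOptimalPair

end AltWalk

/-! ### Counting long alternating paths -/

section Counting

variable [Fintype V] {m h h' : PartnerMap G} {v x z : V} {i : ℕ} {I : Finset ℕ}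

open Classical in
/-- The starting vertices of the alternating paths with at least four edges. -/
noncomputable def longStarts (h h' : PartnerMap G) : Finset V := {v | IsAltPath h h' v 4}

@[simp]
theorem mem_longStarts : v ∈ longStarts h h' ↔ IsAltPath h h' v 4 := by simp [longStarts]

variable [DecidableEq V]

/-- The vertices in the positions `I` of the alternating paths with at least four edges, where
position `0` is the start of a path. -/
noncomputable def longVertices (h h' : PartnerMap G) (I : Finset ℕ) : Finset V :=
  (longStarts h h' ×ˢ I).image fun p ↦ altWalk h h' p.1 p.2

theorem mem_longVertices :
    x ∈ longVertices h h' I ↔ ∃ v, IsAltPath h h' v 4 ∧ ∃ i ∈ I, altWalk h h' v i = x := by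
  simp [longVertices, and_assoc]

theorem longVertices_subset_support_fst : longVertices h h' (Icc 1 4) ⊆ h.support := by
  intro x hx
  obtain ⟨v, hv, i, hi, rfl⟩ := mem_longVertices.1 hx
  rw [mem_Icc] at hi
  exact mem_support.2 (hv.apply_fst_ne hi.1 hi.2 (by grind))

theorem longVertices_subset_support_snd : longVertices h h' (range 4) ⊆ h'.support := by
  intro x hx
  obtain ⟨v, hv, i, hi, rfl⟩ := mem_longVertices.1 hx
  rw [mem_range] at hi
  exact mem_support.2 (hv.apply_snd_ne hi.le (.inl hi))

namespace IsOptimalPair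

theorem altWalk_mem_longVertices (ho : IsOptimalPair h h') (hv : IsAltPath h h' v 4) (hi : i ≤ 4)
    (hI : I ⊆ range 5) : altWalk h h' v i ∈ longVertices h h' I ↔ i ∈ I := by
  refine ⟨fun hmem ↦ ?_, fun hmem ↦ mem_longVertices.2 ⟨v, hv, i, hmem, rfl⟩⟩
  obtain ⟨w, hw, j, hj, heq⟩ := mem_longVertices.1 hmem
  have hj' := mem_range.1 (hI hj)
  exact ((ho.altWalk_inj hw hv (by omega) hi).1 heq).2 ▸ hj

theorem card_longVertices (ho : IsOptimalPair h h') (hI : I ⊆ range 5) :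
    #(longVertices h h' I) = #(longStarts h h') * #I := by
  rw [longVertices, card_image_of_injOn, card_product]
  rintro ⟨v, i⟩ hp ⟨w, j⟩ hq heq
  obtain ⟨hv, hi⟩ := mem_product.1 hp
  obtain ⟨hw, hj⟩ := mem_product.1 hq
  have hi' := mem_range.1 (hI hi)
  have hj' := mem_range.1 (hI hj)
  exact Prod.ext_iff.2 ((ho.altWalk_inj (mem_longStarts.1 hv) (mem_longStarts.1 hw)
    (Nat.le_of_lt_succ hi') (Nat.le_of_lt_succ hj')).1 heq)

theorem four_mul_card_longStarts_le (ho : IsOptimalPair h h') :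
    4 * #(longStarts h h') ≤ #h'.support := by
  have hcard := ho.card_longVertices (I := range 4) (by decide)
  have hle := card_le_card (longVertices_subset_support_snd (h := h) (h' := h'))
  rw [card_range] at hcard
  omega

end IsOptimalPair

namespace IsOptimalFor

theorem isAltPath_two (ho : IsOptimalFor m h h') (hv : m v ≠ v) (hh : h v = v) :
    IsAltPath h h' v 2 := by
  refine ho.isAltPath_succ ⟨hh, fun i hi ↦ ?_⟩ odd_one
  obtain rfl : i = 0 := by omega
  exact (ho.apply_eq_snd hv hh).symm.trans_ne hv

theorem apply_altWalk_two_eq (ho : IsOptimalFor m h h') (hv : m v ≠ v) (hh : h v = v)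
    (hshort : v ∉ longStarts h h') : m (altWalk h h' v 2) = altWalk h h' v 2 := by
  have h₂ := ho.isAltPath_two hv hh
  have hend : h' (altWalk h h' v 2) = altWalk h h' v 2 := by
    by_contra hne
    have h₃ : IsAltPath h h' v 3 := by
      refine ⟨hh, fun i hi ↦ ?_⟩
      obtain hi | rfl := Nat.lt_succ_iff_lt_or_eq.1 hi
      exacts [h₂.succ_ne i hi, hne]
    exact hshort (mem_longStarts.2 (ho.isAltPath_succ h₃ (by decide)))
  by_contra hne
  have heq : m (altWalk h h' v 2) = m v := by
    rw [ho.apply_eq_fst hne hend, ho.apply_eq_snd hv hh]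
    exact apply_altWalk_succ_of_odd odd_one
  have := (ho.altWalk_inj h₂ h₂ le_rfl (Nat.zero_le 2)).1 (m.involutive'.injective heq)
  omega

-- A start of a short path that `m` covers is paid for by the vertex where the path ends: it is
-- covered by `h` but not by `m`.
theorem card_support_le (ho : IsOptimalFor m h h') :
    #m.support ≤ #(longStarts h h') + #h.support := by
  let S := (m.support \ h.support) \ longStarts h h'
  have hS {v : V} (hv : v ∈ S) : m v ≠ v ∧ h v = v ∧ v ∉ longStarts h h' := by
    simpa [S, and_assoc] using hv
  have hends : #S ≤ #(h.support \ m.support) := by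
    refine card_le_card_of_injOn (altWalk h h' · 2) (fun v hv ↦ ?_) (fun v hv w hw heq ↦ ?_)
    · obtain ⟨hm, hh, hshort⟩ := hS hv
      have h₂ := ho.isAltPath_two hm hh
      simpa [ho.apply_altWalk_two_eq hm hh hshort] using
        h₂.apply_fst_ne one_le_two le_rfl (.inr even_two)
    · exact ((ho.altWalk_inj (ho.isAltPath_two (hS hv).1 (hS hv).2.1)
        (ho.isAltPath_two (hS hw).1 (hS hw).2.1) le_rfl le_rfl).1 heq).1
  have hsplit : #(m.support \ h.support) ≤ #S + #(longStarts h h') :=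
    card_le_card_sdiff_add_card
  have hm := card_sdiff_add_card m.support h.support
  have hh := card_sdiff_add_card h.support m.support
  rw [union_comm] at hh
  omega

end IsOptimalFor

/-! ### The extremal case -/

/-- The extremal case of the inequality `4 β(G) ≤ 5 α(G)`. -/
structure IsTight (m h h' : PartnerMap G) : Prop extends IsOptimalFor m h h' where
  card_eq : 4 * #m.support = 5 * #h.support

namespace IsTight

theorem card_support_fst (ht : IsTight m h h') : #h.support = 4 * #(longStarts h h') := by
  have := ht.card_eq
  have := ht.card_support_le
  have := ht.card_snd_le
  have := ht.four_mul_card_longStarts_le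
  omega

theorem card_support_snd (ht : IsTight m h h') : #h'.support = #h.support := by
  have := ht.card_support_fst
  have := ht.card_snd_le
  have := ht.four_mul_card_longStarts_le
  omega

theorem support_fst (ht : IsTight m h h') : h.support = longVertices h h' (Icc 1 4) := by
  refine (eq_of_subset_of_card_le longVertices_subset_support_fst ?_).symm
  rw [ht.card_longVertices (by decide), ht.card_support_fst, Nat.card_Icc, mul_comm]

theorem support_snd (ht : IsTight m h h') : h'.support = longVertices h h' (range 4) := by
  refine (eq_of_subset_of_card_le longVertices_subset_support_snd ?_).symm
  rw [ht.card_longVertices (by decide), ht.card_support_snd, ht.card_support_fst, card_range,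
    mul_comm]

theorem support_eq (ht : IsTight m h h') : m.support = longVertices h h' (range 5) := by
  refine eq_of_subset_of_card_le (fun v hv ↦ ?_) ?_
  · suffices v ∈ h.support ∨ v ∈ h'.support by
      rw [ht.support_fst, ht.support_snd] at this
      simp only [mem_longVertices, mem_Icc, mem_range] at this ⊢
      grind
    rw [mem_support] at hv
    by_cases hh : h v = v
    · exact .inr (mem_support.2 (ht.apply_eq_snd hv hh ▸ hv))
    · exact .inl (mem_support.2 hh)
  · have := ht.card_eq
    have := ht.card_support_fst
    rw [ht.card_longVertices subset_rfl, card_range]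
    omega

theorem apply_altWalk_ne (ht : IsTight m h h') (hv : IsAltPath h h' v 4) (hi : i ≤ 4) :
    m (altWalk h h' v i) ≠ altWalk h h' v i := by
  rw [← mem_support, ht.support_eq, ht.altWalk_mem_longVertices hv hi subset_rfl, mem_range]
  omega

theorem apply_snd_altWalk_four (ht : IsTight m h h') (hv : IsAltPath h h' v 4) :
    h' (altWalk h h' v 4) = altWalk h h' v 4 := by
  rw [← not_ne_iff, ← mem_support, ht.support_snd,
    ht.altWalk_mem_longVertices hv le_rfl (by decide)]
  decide

theorem apply_start (ht : IsTight m h h') (hv : IsAltPath h h' v 4) : m v = altWalk h h' v 1 :=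
  ht.apply_eq_snd (ht.apply_altWalk_ne hv (Nat.zero_le 4)) hv.exposed

theorem apply_altWalk_four (ht : IsTight m h h') (hv : IsAltPath h h' v 4) :
    m (altWalk h h' v 4) = altWalk h h' v 3 := by
  rw [ht.apply_eq_fst (ht.apply_altWalk_ne hv le_rfl) (ht.apply_snd_altWalk_four hv)]
  exact apply_altWalk_succ_of_odd (by decide)

-- `m` pairs the first two and the last two vertices of each path, so that only the middle vertices
-- are left to be partners of each other.
theorem exists_apply_altWalk_two (ht : IsTight m h h') (hv : IsAltPath h h' v 4) :
    ∃ w, IsAltPath h h' w 4 ∧ m (altWalk h h' v 2) = altWalk h h' w 2 := by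
  have hmem : m (altWalk h h' v 2) ∈ longVertices h h' (range 5) := by
    rw [← ht.support_eq, mem_support, apply_apply]
    exact (ht.apply_altWalk_ne hv (by decide)).symm
  obtain ⟨w, hw, i, hi, heq⟩ := mem_longVertices.1 hmem
  have hback : altWalk h h' v 2 = m (altWalk h h' w i) := by rw [heq, apply_apply]
  have hne {j : ℕ} (hj : j ≤ 4) (hj₂ : j ≠ 2) : altWalk h h' v 2 ≠ altWalk h h' w j :=
    fun e ↦ hj₂ ((ht.altWalk_inj hv hw (by decide) hj).1 e).2.symm
  have h₀ := ht.apply_start hw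
  have h₄ := ht.apply_altWalk_four hw
  rw [mem_range] at hi
  interval_cases i
  · exact (hne (by decide) (by decide) (hback.trans h₀)).elim
  · exact (hne (Nat.zero_le 4) (by decide) (hback.trans (by rw [← h₀, apply_apply]; rfl))).elim
  · exact ⟨w, hw, heq.symm⟩
  · exact (hne le_rfl (by decide) (hback.trans (by rw [← h₄, apply_apply]))).elim
  · exact (hne (by decide) (by decide) (hback.trans h₄)).elim

theorem not_adj_altWalk_two (ht : IsTight m h h') (hz : h z = z) (hz' : h' z = z)
    (hv : IsAltPath h h' v 4) : ¬ G.Adj z (altWalk h h' v 2) := by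
  intro hadj
  have h₂ : h (altWalk h h' v 2) = altWalk h h' v 1 := apply_altWalk_succ_of_odd odd_one
  have h₁ : h' (altWalk h h' v 1) = v := apply_altWalk_succ_of_even Even.zero
  have hz₁ : z ≠ altWalk h h' v 1 := by
    rintro rfl
    exact hv.apply_snd_ne (by decide) (by decide) hz'
  have hne := ht.apply_ne_of_adj hz hadj (hz'.trans_ne hadj.ne) (by rwa [hz', h₂])
    (by rw [h₂]; exact hv.apply_snd_ne (by decide) (by decide))
  rw [h₂, h₁] at hne
  exact hne hv.exposed

theorem not_adj_altWalk_one (ht : IsTight m h h') (hz : h z = z) (hz' : h' z = z)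
    (hv : IsAltPath h h' v 4) : ¬ G.Adj z (altWalk h h' v 1) := by
  intro hadj
  obtain ⟨w, hw, hvw⟩ := ht.exists_apply_altWalk_two hv
  have hmid : G.Adj (altWalk h h' v 2) (altWalk h h' w 2) :=
    hvw ▸ m.adj (ht.apply_altWalk_ne hv (by decide))
  have h₁ : h (altWalk h h' v 1) = altWalk h h' v 2 := (altWalk_succ_of_odd odd_one).symm
  have h₂' : h' (altWalk h h' v 2) = altWalk h h' v 3 := (altWalk_succ_of_even even_two).symm
  have h₂ : h (altWalk h h' w 2) = altWalk h h' w 1 := apply_altWalk_succ_of_odd odd_one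
  have h₁' : h' (altWalk h h' w 1) = w := apply_altWalk_succ_of_even Even.zero
  have hinj {i j : ℕ} (hi : i ≤ 4) (hj : j ≤ 4) (hij : i ≠ j) :
      altWalk h h' v i ≠ altWalk h h' w j := fun e ↦ hij ((ht.altWalk_inj hv hw hi hj).1 e).2
  have hne := ht.apply_ne_of_adj_of_adj hz hz' hadj (h₁ ▸ hmid)
    (hinj (by decide) (by decide) (by decide))
    (by rw [h₁, h₂']; exact hinj (by decide) (by decide) (by decide))
    (by rw [h₁, h₂', h₂]; exact hinj (by decide) (by decide) (by decide))
    (by rw [h₂]; exact hw.apply_snd_ne (by decide) (by decide))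
  rw [h₂, h₁'] at hne
  exact hne hw.exposed

theorem not_adj_altWalk_three (ht : IsTight m h h') (hz : h z = z) (hz' : h' z = z)
    (hv : IsAltPath h h' v 4) : ¬ G.Adj z (altWalk h h' v 3) := by
  intro hadj
  obtain ⟨w, hw, hvw⟩ := ht.exists_apply_altWalk_two hv
  have hmid : G.Adj (altWalk h h' v 2) (altWalk h h' w 2) :=
    hvw ▸ m.adj (ht.apply_altWalk_ne hv (by decide))
  have h₃' : h' (altWalk h h' v 3) = altWalk h h' v 2 := apply_altWalk_succ_of_even even_two
  have h₂ : h (altWalk h h' v 2) = altWalk h h' v 1 := apply_altWalk_succ_of_odd odd_one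
  have h₂' : h' (altWalk h h' w 2) = altWalk h h' w 3 := (altWalk_succ_of_even even_two).symm
  have h₃ : h (altWalk h h' w 3) = altWalk h h' w 4 := (altWalk_succ_of_odd (by decide)).symm
  have hinj {i j : ℕ} (hi : i ≤ 4) (hj : j ≤ 4) (hij : i ≠ j) :
      altWalk h h' v i ≠ altWalk h h' w j := fun e ↦ hij ((ht.altWalk_inj hv hw hi hj).1 e).2
  have hne := (ht.flip ht.card_support_snd).apply_ne_of_adj_of_adj hz' hz hadj (h₃' ▸ hmid)
    (hinj (by decide) (by decide) (by decide))
    (by rw [h₃', h₂]; exact hinj (by decide) (by decide) (by decide))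
    (by rw [h₃', h₂, h₂']; exact hinj (by decide) (by decide) (by decide))
    (by rw [h₂']; exact hw.apply_fst_ne (by decide) (by decide) (by decide))
  rw [h₂', h₃] at hne
  exact hne (ht.apply_snd_altWalk_four hw)

theorem exists_altWalk_eq (ht : IsTight m h h') (hz : ∃ y, G.Adj z y) :
    ∃ v, IsAltPath h h' v 4 ∧ ∃ i < 5, altWalk h h' v i = z := by
  by_contra hnot
  have hmiss : h z = z ∧ h' z = z := by
    simp only [← not_ne_iff (a := h z), ← not_ne_iff (a := h' z), ← mem_support, ht.support_fst,
      ht.support_snd, mem_longVertices, mem_Icc, mem_range]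
    grind
  obtain ⟨hz₁, hz₂⟩ := hmiss
  obtain ⟨y, hzy⟩ := hz
  have hy : y ∈ h.support := mem_support.2 (ht.link_fst hz₁ hzy (hz₂.trans_ne hzy.ne)).1
  have hy' : y ∈ h'.support := mem_support.2 (ht.link_snd hz₂ hzy (hz₁.trans_ne hzy.ne)).1
  rw [ht.support_fst] at hy
  obtain ⟨v, hv, i, hi, rfl⟩ := mem_longVertices.1 hy
  rw [mem_Icc] at hi
  rw [ht.support_snd, ht.altWalk_mem_longVertices hv hi.2 (by decide), mem_range] at hy'
  obtain ⟨hi, -⟩ := hi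
  interval_cases i
  exacts [ht.not_adj_altWalk_one hz₁ hz₂ hv hzy, ht.not_adj_altWalk_two hz₁ hz₂ hv hzy,
    ht.not_adj_altWalk_three hz₁ hz₂ hv hzy]

theorem card_support_eq_card (ht : IsTight m h h') (hG : ∀ v, ∃ u, G.Adj v u) :
    #m.support = Fintype.card V := by
  refine congrArg card (eq_univ_of_forall fun z ↦ ?_)
  obtain ⟨v, hv, i, hi, rfl⟩ := ht.exists_altWalk_eq (hG z)
  exact mem_support.2 (ht.apply_altWalk_ne hv (Nat.le_of_lt_succ hi))

theorem exists_isSForest (ht : IsTight m h h') (hG : ∀ v, ∃ u, G.Adj v u) :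
    ∃ F ≤ G, IsSForest F ∧ 10 * Nat.card F.ConnectedComponent = #m.support := by
  let q (p : {v // IsAltPath h h' v 4} × Fin 5) : V := altWalk h h' p.1 p.2
  have hinj {v w : {v // IsAltPath h h' v 4}} {i j : Fin 5} :
      q (v, i) = q (w, j) → v = w ∧ i = j := by
    simpa only [Subtype.ext_iff, Fin.ext_iff] using
      (ht.altWalk_inj v.2 w.2 (Nat.le_of_lt_succ i.2) (Nat.le_of_lt_succ j.2)).1
  have hq : Function.Bijective q := by
    refine ⟨fun _ _ heq ↦ Prod.ext_iff.2 (hinj heq), fun z ↦ ?_⟩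
    obtain ⟨v, hv, i, hi, rfl⟩ := ht.exists_altWalk_eq (hG z)
    exact ⟨(⟨v, hv⟩, ⟨i, hi⟩), rfl⟩
  have hmiddle (v : {v // IsAltPath h h' v 4}) :
      ∃ w : {v // IsAltPath h h' v 4}, m (q (v, 2)) = q (w, 2) := by
    obtain ⟨w, hw, heq⟩ := ht.exists_apply_altWalk_two v.2
    exact ⟨⟨w, hw⟩, heq⟩
  choose σ hσ using hmiddle
  have hinv : Function.Involutive σ := by
    intro v
    refine (hinj (i := 2) (j := 2) ?_).1
    rw [← hσ, ← hσ, apply_apply]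
  have hadj (v : {v // IsAltPath h h' v 4}) : G.Adj (q (v, 2)) (q (σ v, 2)) :=
    hσ v ▸ m.adj (ht.apply_altWalk_ne v.2 (i := 2) (by decide))
  rw [ht.card_support_eq_card hG, ← Nat.card_eq_fintype_card]
  exact exists_isSForest_of_paths hq (fun v i ↦ v.2.adj i.2) hinv hadj

end IsTight

end Counting

end PartnerMap

end

/-- if `β(G)/α(G) = 5/4` for a graph `G` without isolated vertices, then
`G` has a spanning S-forest with exactly `β(G) − α(G)` connected components. -/
theorem stmt15 {V : Type*} [Fintype V] [DecidableEq V] (G : SimpleGraph V)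
    (hiso : ∀ v : V, ∃ u : V, G.Adj v u)
    (heq : 4 * gBeta G = 5 * gAlpha G) :
    ∃ F : SimpleGraph V, F ≤ G ∧ IsSForest F ∧
      Nat.card F.ConnectedComponent = gBeta G - gAlpha G := by
  obtain ⟨m, hm⟩ := PartnerMap.exists_card_support_eq_gBeta G
  obtain ⟨h, h', ho, hh⟩ := PartnerMap.exists_isOptimalFor m
  have ht : PartnerMap.IsTight m h h' := ⟨ho, by omega⟩
  obtain ⟨F, hFG, hF, hcard⟩ := ht.exists_isSForest hiso
  exact ⟨F, hFG, hF, by omega⟩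
end

section
/- Let G be a finite simple graph without isolated vertices with β(G)/α(G) = 5/4 (i.e., 4·β(G) = 5·α(G)), and let F be any spanning S-forest of G. If (u, v) is an edge of G not belonging to F and u has degree 1 in F, then v is the base of u, i.e., v has degree 3 in F and the distance between u and v in F equals 2. -/
open SimpleGraph

/-!
Partition the vertex set into paths with on average at least five vertices. Taking the edges of
each path alternately, starting from its first edge, gives two disjoint matchings `H` and `H'`.
When `5 α(G) = 4 β(G)`, the bound `λ(G) ≤ 2 α(G)` makes the pair `(H, H')` optimal, and then
`|H| ≤ α(G) ≤ 2|V|/5` leaves no room for a path with an even number of vertices. A spanning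
S-forest provides such a partition, two paths of five vertices for each spanner, and an edge of
`G` outside `F` from a vertex of degree one to a vertex other than its base would allow the paths
of the at most two spanners it meets to be rerouted so that some of them become even.
-/

section Matchings

variable {V : Type*} {G : SimpleGraph V}

theorem isMatchingE_toFinset [DecidableEq V] {E : List (Sym2 V)} (hG : ∀ e ∈ E, e ∈ G.edgeSet)
    (hE : E.Pairwise fun e f ↦ ∀ v ∈ e, v ∉ f) : IsMatchingE G E.toFinset := by
  refine ⟨fun e he ↦ hG e (List.mem_toFinset.1 he), fun e he f hf hne v hv ↦ ?_⟩
  have hsymm : Std.Symm fun e f : Sym2 V ↦ ∀ v ∈ e, v ∉ f := ⟨fun _ _ h v hf he ↦ h v he hf⟩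
  exact hE.forall (List.mem_toFinset.1 he) (List.mem_toFinset.1 hf) hne v hv.1 hv.2

theorem nodup_of_pairwise_disjoint_edges {E : List (Sym2 V)}
    (hE : E.Pairwise fun e f ↦ ∀ v ∈ e, v ∉ f) : E.Nodup :=
  hE.imp fun {e f} h (hef : e = f) ↦ h _ e.out_fst_mem (hef ▸ e.out_fst_mem)

theorem IsMatchingE.two_mul_card_le [Fintype V] {M : Finset (Sym2 V)} (hM : IsMatchingE G M) :
    2 * M.card ≤ Fintype.card V := by
  classical
  have hdisj : (M : Set (Sym2 V)).PairwiseDisjoint Sym2.toFinset := fun e he f hf hne ↦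
    Finset.disjoint_left.2 fun v hve hvf ↦
      hM.2 e he f hf hne v ⟨Sym2.mem_toFinset.1 hve, Sym2.mem_toFinset.1 hvf⟩
  have hcard : ∀ e ∈ M, e.toFinset.card = 2 := fun e he ↦
    Sym2.card_toFinset_of_not_isDiag e (G.not_isDiag_of_mem_edgeSet (hM.1 he))
  calc 2 * M.card = (M.biUnion Sym2.toFinset).card := by
        rw [Finset.card_biUnion hdisj, Finset.sum_const_nat hcard, mul_comm]
    _ ≤ Fintype.card V := Finset.card_le_univ _

theorem two_mul_gBeta_le [Fintype V] : 2 * gBeta G ≤ Fintype.card V := by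
  have hle : gBeta G ≤ Fintype.card V / 2 := csSup_le' <| by
    rintro _ ⟨M, hM, rfl⟩
    have := hM.two_mul_card_le
    omega
  omega

theorem bddAbove_card_add_card [Finite V] :
    BddAbove {n | ∃ H H' : Finset (Sym2 V), IsMatchingE G H ∧ IsMatchingE G H' ∧
      Disjoint H H' ∧ H.card + H'.card = n} := by
  have := Fintype.ofFinite V
  refine ⟨Fintype.card V, ?_⟩
  rintro _ ⟨H, H', hH, hH', -, rfl⟩
  have := hH.two_mul_card_le
  have := hH'.two_mul_card_le
  omega

theorem card_add_card_le_gLam [Finite V] {H H' : Finset (Sym2 V)} (hH : IsMatchingE G H)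
    (hH' : IsMatchingE G H') (hd : Disjoint H H') : H.card + H'.card ≤ gLam G :=
  le_csSup bddAbove_card_add_card ⟨H, H', hH, hH', hd, rfl⟩

theorem card_le_gAlpha [Finite V] {H H' : Finset (Sym2 V)} (hH : IsMatchingE G H)
    (hH' : IsMatchingE G H') (hd : Disjoint H H') (hlam : gLam G ≤ H.card + H'.card) :
    H.card ≤ gAlpha G := by
  refine le_csSup (bddAbove_card_add_card (G := G).mono ?_)
    ⟨H, H', hH, hH', hd, (card_add_card_le_gLam hH hH' hd).antisymm hlam, rfl⟩
  rintro _ ⟨K, -, hK, -, -, -, rfl⟩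
  exact ⟨K, ∅, hK, ⟨by simp, by simp⟩, by simp, by simp⟩

theorem gLam_le_two_mul_gAlpha [Finite V] : gLam G ≤ 2 * gAlpha G := by
  obtain ⟨H, H', hH, hH', hd, hlam⟩ := Nat.sSup_mem
    (s := {n | ∃ H H' : Finset (Sym2 V), IsMatchingE G H ∧ IsMatchingE G H' ∧
      Disjoint H H' ∧ H.card + H'.card = n})
    ⟨0, ∅, ∅, ⟨by simp, by simp⟩, ⟨by simp, by simp⟩, by simp, by simp⟩ bddAbove_card_add_card
  change _ = gLam G at hlam
  have := card_le_gAlpha hH hH' hd hlam.ge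
  have := card_le_gAlpha hH' hH hd.symm (by omega)
  omega

end Matchings

section AltEdges

variable {V : Type*}

/-- The first, third, fifth, … edges of the path that visits the entries of a list in order.
The remaining edges of the path `l` are `altEdges l.tail`. -/
def altEdges : List V → List (Sym2 V)
  | a :: b :: l => s(a, b) :: altEdges l
  | _ => []

theorem length_altEdges : ∀ l : List V, (altEdges l).length = l.length / 2
  | [] | [_] => by simp [altEdges]
  | _ :: _ :: l => by
    rw [altEdges, List.length_cons, length_altEdges l, List.length_cons, List.length_cons]
    omega

theorem mem_of_mem_altEdges {e : Sym2 V} {v : V} (hv : v ∈ e) :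
    ∀ {l : List V}, e ∈ altEdges l → v ∈ l
  | a :: b :: l, he => by
    rw [altEdges, List.mem_cons] at he
    obtain rfl | he := he
    · obtain rfl | rfl := Sym2.mem_iff.1 hv <;> simp
    · exact List.mem_cons_of_mem _ (List.mem_cons_of_mem _ (mem_of_mem_altEdges hv he))

theorem mem_edgeSet_of_mem_altEdges {G : SimpleGraph V} {e : Sym2 V} :
    ∀ {l : List V}, l.IsChain G.Adj → e ∈ altEdges l → e ∈ G.edgeSet
  | a :: b :: l, hl, he => by
    rw [altEdges, List.mem_cons] at he
    obtain rfl | he := he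
    · exact hl.rel
    · exact mem_edgeSet_of_mem_altEdges hl.tail.tail he

theorem pairwise_altEdges :
    ∀ {l : List V}, l.Nodup → (altEdges l).Pairwise fun e f ↦ ∀ v ∈ e, v ∉ f
  | [], _ => .nil
  | [_], _ => .nil
  | a :: b :: l, hl => by
    obtain ⟨ha, hb, hl⟩ : a ∉ b :: l ∧ b ∉ l ∧ l.Nodup := by simpa only [List.nodup_cons] using hl
    refine List.pairwise_cons.2 ⟨fun f hf v hv hvf ↦ ?_, pairwise_altEdges hl⟩
    have hvl : v ∈ l := mem_of_mem_altEdges hvf hf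
    obtain rfl | rfl := Sym2.mem_iff.1 hv
    · exact ha (List.mem_cons_of_mem _ hvl)
    · exact hb hvl

theorem disjoint_altEdges_tail : ∀ {l : List V}, l.Nodup → (altEdges l).Disjoint (altEdges l.tail)
  | [], _ => List.disjoint_nil_left _
  | [_], _ => List.disjoint_nil_left _
  | a :: b :: l, hl => by
    obtain ⟨ha, hbl⟩ := List.nodup_cons.1 hl
    exact List.disjoint_cons_left.2
      ⟨fun he ↦ ha (mem_of_mem_altEdges (Sym2.mem_mk_left a b) he),
        (disjoint_altEdges_tail hbl).symm⟩

end AltEdges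

section PathSystems

variable {V : Type*} {G : SimpleGraph V} {P Q : List (List V)}

/-- A family of pairwise vertex-disjoint paths of `G`, each given by the list of its vertices in
order. Empty lists are allowed. -/
structure IsPathSystem (G : SimpleGraph V) (P : List (List V)) : Prop where
  isChain : ∀ l ∈ P, l.IsChain G.Adj
  nodup : P.flatten.Nodup

instance [DecidableEq V] [DecidableRel G.Adj] : Decidable (IsPathSystem G P) :=
  decidable_of_iff ((∀ l ∈ P, l.IsChain G.Adj) ∧ P.flatten.Nodup)
    ⟨fun h ↦ ⟨h.1, h.2⟩, fun h ↦ ⟨h.isChain, h.nodup⟩⟩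

theorem IsPathSystem.map_tail (hP : IsPathSystem G P) : IsPathSystem G (P.map List.tail) where
  isChain := by
    simp only [List.mem_map, forall_exists_index, and_imp, forall_apply_eq_imp_iff₂]
    exact fun l hl ↦ (hP.isChain l hl).tail
  nodup := by
    obtain ⟨hnodup, hdisj⟩ := List.nodup_flatten.1 hP.nodup
    refine List.nodup_flatten.2 ⟨?_, List.pairwise_map.2 <| hdisj.imp fun h ↦
      List.disjoint_of_subset_left (List.tail_subset _)
        (List.disjoint_of_subset_right (List.tail_subset _) h)⟩
    simp only [List.mem_map, forall_exists_index, and_imp, forall_apply_eq_imp_iff₂]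
    exact fun l hl ↦ (hnodup l hl).tail

theorem IsPathSystem.append (hP : IsPathSystem G P) (hQ : IsPathSystem G Q)
    (hd : P.flatten.Disjoint Q.flatten) : IsPathSystem G (P ++ Q) where
  isChain l hl := (List.mem_append.1 hl).elim (hP.isChain l) (hQ.isChain l)
  nodup := by
    rw [List.flatten_append]
    exact hP.nodup.append hQ.nodup hd

theorem IsPathSystem.map {W : Type*} {K : SimpleGraph W} {P : List (List W)}
    (hP : IsPathSystem K P) {f : W → V} (hf : f.Injective) (hK : K ≤ G.comap f) :
    IsPathSystem G (P.map (List.map f)) where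
  isChain := by
    simp only [List.mem_map, forall_exists_index, and_imp, forall_apply_eq_imp_iff₂]
    exact fun l hl ↦ (List.isChain_map f).2 ((hP.isChain l hl).imp fun _ _ h ↦ hK h)
  nodup := by
    rw [← List.map_flatten]
    exact hP.nodup.map hf

theorem IsPathSystem.pairwise_flatMap_altEdges (hP : IsPathSystem G P) :
    (P.flatMap altEdges).Pairwise fun e f ↦ ∀ v ∈ e, v ∉ f := by
  obtain ⟨hnodup, hdisj⟩ := List.nodup_flatten.1 hP.nodup
  exact List.pairwise_flatMap.2 ⟨fun l hl ↦ pairwise_altEdges (hnodup l hl), hdisj.imp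
    fun h e he f hf v hve hvf ↦ h (mem_of_mem_altEdges hve he) (mem_of_mem_altEdges hvf hf)⟩

theorem IsPathSystem.disjoint_flatMap_altEdges (hP : IsPathSystem G P) :
    (P.flatMap altEdges).Disjoint ((P.map List.tail).flatMap altEdges) := by
  obtain ⟨hnodup, hdisj⟩ := List.nodup_flatten.1 hP.nodup
  simp only [List.disjoint_left, List.mem_flatMap, List.mem_map, not_exists, not_and,
    forall_exists_index, and_imp, forall_apply_eq_imp_iff₂]
  intro e l hl he m hm hem
  obtain rfl | hne := eq_or_ne l m
  · exact disjoint_altEdges_tail (hnodup l hl) he hem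
  · have hsymm : Std.Symm (List.Disjoint (α := V)) := ⟨fun _ _ h ↦ h.symm⟩
    exact hdisj.forall hl hm hne (mem_of_mem_altEdges e.out_fst_mem he)
      (List.mem_of_mem_tail (mem_of_mem_altEdges e.out_fst_mem hem))

theorem IsPathSystem.exists_disjoint_matchings (hP : IsPathSystem G P) :
    ∃ H H' : Finset (Sym2 V), IsMatchingE G H ∧ IsMatchingE G H' ∧ Disjoint H H' ∧
      H.card = (P.flatMap altEdges).length ∧
      H'.card = ((P.map List.tail).flatMap altEdges).length := by
  classical
  have hmatching {P} (hP : IsPathSystem G P) : IsMatchingE G (P.flatMap altEdges).toFinset := by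
    refine isMatchingE_toFinset (fun e he ↦ ?_) hP.pairwise_flatMap_altEdges
    obtain ⟨l, hl, he⟩ := List.mem_flatMap.1 he
    exact mem_edgeSet_of_mem_altEdges (hP.isChain l hl) he
  have hcard {P} (hP : IsPathSystem G P) := List.toFinset_card_of_nodup
    (nodup_of_pairwise_disjoint_edges hP.pairwise_flatMap_altEdges)
  exact ⟨_, _, hmatching hP, hmatching hP.map_tail,
    List.disjoint_toFinset_iff_disjoint.2 hP.disjoint_flatMap_altEdges,
    hcard hP, hcard hP.map_tail⟩

theorem length_flatten_add_countP_even (P : List (List V)) :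
    P.flatten.length + P.countP (Even ·.length) =
      2 * (P.flatMap altEdges).length + P.length := by
  induction P with
  | nil => rfl
  | cons l P ih =>
    simp only [List.flatten_cons, List.length_append, List.countP_cons, List.flatMap_cons,
      length_altEdges, List.length_cons, decide_eq_true_eq]
    split_ifs with hl <;> grind

theorem length_flatten_le (P : List (List V)) :
    P.flatten.length ≤ (P.flatMap altEdges).length +
      ((P.map List.tail).flatMap altEdges).length + P.length := by
  induction P with
  | nil => rfl
  | cons l P ih =>
    simp only [List.flatten_cons, List.length_append, List.flatMap_cons, List.map_cons,
      length_altEdges, List.length_tail, List.length_cons]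
    omega

end PathSystems

section Rigidity

variable {V W : Type*} {G : SimpleGraph V} {S T : Set V} {P Q : List (List V)}

/-- A partition of the vertex set `S` into paths of `G`. -/
structure IsPathPartition (G : SimpleGraph V) (S : Set V) (P : List (List V)) : Prop
    extends IsPathSystem G P where
  mem_flatten_iff : ∀ v, v ∈ P.flatten ↔ v ∈ S

instance [Fintype V] [DecidableEq V] [DecidableRel G.Adj] :
    Decidable (IsPathPartition G Set.univ P) :=
  decidable_of_iff (IsPathSystem G P ∧ ∀ v, v ∈ P.flatten)
    ⟨fun h ↦ ⟨h.1, fun v ↦ iff_of_true (h.2 v) trivial⟩,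
      fun h ↦ ⟨h.1, fun v ↦ (h.2 v).2 trivial⟩⟩

theorem IsPathPartition.union (hP : IsPathPartition G S P) (hQ : IsPathPartition G T Q)
    (hST : Disjoint S T) : IsPathPartition G (S ∪ T) (P ++ Q) where
  toIsPathSystem := hP.toIsPathSystem.append hQ.toIsPathSystem fun v hvP hvQ ↦
    Set.disjoint_left.1 hST ((hP.mem_flatten_iff v).1 hvP) ((hQ.mem_flatten_iff v).1 hvQ)
  mem_flatten_iff v := by
    rw [List.flatten_append, List.mem_append, hP.mem_flatten_iff, hQ.mem_flatten_iff, Set.mem_union]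

theorem IsPathPartition.map {K : SimpleGraph W} {P : List (List W)}
    (hP : IsPathPartition K Set.univ P) {f : W → V} (hf : f.Injective) (hK : K ≤ G.comap f) :
    IsPathPartition G (Set.range f) (P.map (List.map f)) where
  toIsPathSystem := hP.toIsPathSystem.map hf hK
  mem_flatten_iff v := by
    simp only [← List.map_flatten, List.mem_map, hP.mem_flatten_iff, Set.mem_univ, true_and,
      Set.mem_range]

/-- Every partition of `S` into paths of `G` with on average at least five vertices consists of
paths with an odd number of vertices. -/
def IsPathRigid (G : SimpleGraph V) (S : Set V) : Prop :=
  ∀ P, IsPathPartition G S P → 5 * P.length ≤ P.flatten.length → ∀ l ∈ P, Odd l.length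

theorem isPathRigid_univ [Finite V] (h : 5 * gAlpha G ≤ 4 * gBeta G) :
    IsPathRigid G Set.univ := by
  classical
  intro P hP hlen
  have := Fintype.ofFinite V
  have hcard : P.flatten.length = Fintype.card V := by
    rw [← List.toFinset_card_of_nodup hP.nodup, ← Finset.card_univ]
    congr 1
    ext v
    simpa using hP.mem_flatten_iff v
  obtain ⟨H, H', hH, hH', hd, hHcard, hH'card⟩ := hP.exists_disjoint_matchings
  have hmany := length_flatten_le P
  have heven := length_flatten_add_countP_even P
  have hβ := two_mul_gBeta_le (G := G)
  have hlam := gLam_le_two_mul_gAlpha (G := G)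
  -- `λ ≤ 2α ≤ 8β/5 ≤ 4|V|/5 ≤ |V| - |P| ≤ |H| + |H'|`
  have hmax : gLam G ≤ H.card + H'.card := by omega
  have hα : H.card ≤ gAlpha G := card_le_gAlpha hH hH' hd hmax
  -- `|V| - |P| + #even = 2|H| ≤ 2α ≤ 4|V|/5 ≤ |V| - |P|`
  have hzero : P.countP (Even ·.length) = 0 := by omega
  simpa only [List.countP_eq_zero, decide_eq_true_eq, Nat.not_even_iff_odd] using hzero

theorem IsPathRigid.of_union (h : IsPathRigid G (S ∪ T)) (hST : Disjoint S T)
    (hQ : IsPathPartition G T Q) (hlen : 5 * Q.length ≤ Q.flatten.length) : IsPathRigid G S := by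
  intro P hP hP5 l hl
  refine h _ (hP.union hQ hST) ?_ l (List.mem_append_left _ hl)
  rw [List.flatten_append, List.length_append, List.length_append]
  omega

theorem IsPathRigid.of_injective {f : W → V} (h : IsPathRigid G (Set.range f))
    (hf : f.Injective) {K : SimpleGraph W} (hK : K ≤ G.comap f) : IsPathRigid K Set.univ := by
  intro P hP hlen l hl
  have hlen' : 5 * (P.map (List.map f)).length ≤ (P.map (List.map f)).flatten.length := by
    rwa [← List.map_flatten, List.length_map, List.length_map]
  simpa only [List.length_map] using h _ (hP.map hf hK) hlen' _ (List.mem_map_of_mem hl)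

end Rigidity

section Spanner

instance : DecidableRel Spanner10.Adj := by
  unfold Spanner10
  infer_instance

instance {V W : Type*} {G : SimpleGraph V} {H : SimpleGraph W} [DecidableRel G.Adj]
    [DecidableRel H.Adj] : DecidableRel (G ⊕g H).Adj
  | .inl u, .inl v => inferInstanceAs (Decidable (G.Adj u v))
  | .inr u, .inr v => inferInstanceAs (Decidable (H.Adj u v))
  | .inl _, .inr _ | .inr _, .inl _ => .isFalse Bool.false_ne_true

/-- The partition of the spanner into its two paths `a₁a₂a₃a₄a₅` and `b₁b₂b₃b₄b₅`. -/
def spannerPaths : List (List (Fin 10)) := [[0, 1, 2, 3, 4], [5, 6, 7, 8, 9]]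

theorem isPathPartition_spannerPaths : IsPathPartition Spanner10 Set.univ spannerPaths := by
  decide

/-- For `j ≥ 3`, a partition of the spanner with the additional edge joining `a₁` to the vertex `j`
into at most two paths, each with an even number of vertices. -/
def singleReroute : Fin 10 → List (List (Fin 10)) :=
  ![[], [], [],
    [[4, 3, 0, 1, 2, 7, 6, 5], [8, 9]],
    [[1, 0, 4, 3, 2, 7, 6, 5], [8, 9]],
    [[4, 3, 2, 1, 0, 5, 6, 7, 8, 9]],
    [[5, 6, 0, 1, 2, 7, 8, 9], [3, 4]],
    [[4, 3, 2, 1, 0, 7, 8, 9], [5, 6]],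
    [[9, 8, 0, 1, 2, 7, 6, 5], [3, 4]],
    [[4, 3, 2, 1, 0, 9, 8, 7, 6, 5]]]

theorem not_isPathRigid_spanner_sup_edge {j : Fin 10} (hj : 3 ≤ j) :
    ¬ IsPathRigid (Spanner10 ⊔ edge 0 j) Set.univ := by
  have key : ∀ j, 3 ≤ j → IsPathPartition (Spanner10 ⊔ edge 0 j) Set.univ (singleReroute j) ∧
      5 * (singleReroute j).length ≤ (singleReroute j).flatten.length ∧
      ∃ l ∈ singleReroute j, ¬ Odd l.length := by
    unfold edge
    decide
  obtain ⟨hP, hlen, l, hl, hodd⟩ := key j hj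
  exact fun h ↦ hodd (h _ hP hlen l hl)

/-- For `j ≤ 2`, a partition of two disjoint spanners with an additional edge joining `a₁` of the
first to the vertex `j` of the second into at most four paths, not all of them with an odd number
of vertices. -/
def doubleReroute (j : Fin 10) : List (List (Fin 10 ⊕ Fin 10)) :=
  [5, 6, 7, 8, 9].map .inl ::
    ![[[4, 3, 2, 1, 0].map .inl ++ [0, 1, 2, 3, 4].map .inr, [5, 6, 7, 8, 9].map .inr],
      [[4, 3, 2, 1, 0].map .inl ++ [1, 0].map .inr, [4, 3, 2, 7, 6, 5].map .inr, [8, 9].map .inr],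
      [[4, 3, 2, 1, 0].map .inl ++ [2, 3, 4].map .inr, [0, 1].map .inr, [5, 6, 7, 8, 9].map .inr],
      [], [], [], [], [], [], []] j

theorem not_isPathRigid_two_spanners_sup_edge {j : Fin 10} (hj : j ≤ 2) :
    ¬ IsPathRigid ((Spanner10 ⊕g Spanner10) ⊔ edge (.inl 0) (.inr j)) Set.univ := by
  have key : ∀ j ≤ 2,
      IsPathPartition ((Spanner10 ⊕g Spanner10) ⊔ edge (.inl 0) (.inr j)) Set.univ
        (doubleReroute j) ∧
      5 * (doubleReroute j).length ≤ (doubleReroute j).flatten.length ∧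
      ∃ l ∈ doubleReroute j, ¬ Odd l.length := by
    unfold edge
    decide
  obtain ⟨hP, hlen, l, hl, hodd⟩ := key j hj
  exact fun h ↦ hodd (h _ hP hlen l hl)

/-- The automorphism of the spanner that reverses the path `a₁a₂a₃a₄a₅`. -/
def spannerReverse : Spanner10 ≃g Spanner10 where
  toEquiv := Equiv.swap 0 4 * Equiv.swap 1 3
  map_rel_iff' := by decide

/-- The automorphism of the spanner that exchanges its two paths. -/
def spannerExchange : Spanner10 ≃g Spanner10 where
  toEquiv := Equiv.addRight 5
  map_rel_iff' := by decide

theorem exists_spanner_iso_le_two (i : Fin 10) : ∃ σ : Spanner10 ≃g Spanner10, σ i ≤ 2 := by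
  have key : ∀ i, i ≤ 2 ∨ spannerReverse i ≤ 2 ∨ spannerExchange i ≤ 2 ∨
      (spannerExchange.trans spannerReverse) i ≤ 2 := by
    decide
  obtain h | h | h | h := key i
  exacts [⟨.refl, h⟩, ⟨_, h⟩, ⟨_, h⟩, ⟨_, h⟩]

theorem fdeg_spanner {i : Fin 10} (hi : i ≤ 2) : fdeg Spanner10 i = i.val + 1 := by
  have key : ∀ i ≤ (2 : Fin 10), (Spanner10.neighborSet i).toFinset.card = i.val + 1 := by decide
  rw [fdeg, Set.ncard_eq_toFinset_card', key i hi]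

end Spanner

section SForests

variable {V W : Type*} {G F : SimpleGraph V} {K : SimpleGraph W}

theorem le_comap_of_le {φ : K ↪g F} (hFG : F ≤ G) : K ≤ G.comap φ :=
  fun _ _ h ↦ hFG (φ.map_adj_iff.2 h)

theorem sup_edge_le_comap {f : W → V} (hK : K ≤ G.comap f) {i j : W} (h : G.Adj (f i) (f j)) :
    K ⊔ edge i j ≤ G.comap f :=
  sup_le hK ((edge_le_iff _).2 (.inr h))

theorem fdeg_apply_of_range_eq_supp {c : F.ConnectedComponent} {φ : K ↪g F}
    (hφ : Set.range φ = c.supp) (i : W) : fdeg F (φ i) = fdeg K i := by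
  have hnbr : F.neighborSet (φ i) = φ '' K.neighborSet i := by
    ext w
    refine ⟨fun hw ↦ ?_, ?_⟩
    · have hwc : w ∈ c.supp := c.mem_supp_of_adj_mem_supp (hφ ▸ Set.mem_range_self i) hw
      obtain ⟨j, rfl⟩ := hφ ▸ hwc
      exact ⟨j, φ.map_adj_iff.1 hw, rfl⟩
    · rintro ⟨j, hj, rfl⟩
      exact φ.map_adj_iff.2 hj
  rw [fdeg, fdeg, hnbr, Set.ncard_image_of_injective _ φ.injective]

theorem dist_eq_two_of_adj_adj {u w v : V} (huw : F.Adj u w) (hwv : F.Adj w v) (hne : u ≠ v)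
    (huv : ¬ F.Adj u v) : F.dist u v = 2 := by
  have hle : F.dist u v ≤ 2 := dist_le (.cons huw (.cons hwv .nil))
  have hpos : 0 < F.dist u v := (huw.reachable.trans hwv.reachable).pos_dist_of_ne hne
  have hne_one : F.dist u v ≠ 1 := fun h ↦ huv (dist_eq_one_iff_adj.1 h)
  omega

theorem IsSForest.exists_embedding (hF : IsSForest F) (v : V) :
    ∃ φ : Spanner10 ↪g F, Set.range φ = (F.connectedComponentMk v).supp ∧ ∃ i ≤ 2, φ i = v := by
  obtain ⟨e⟩ := hF (F.connectedComponentMk v)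
  obtain ⟨σ, hσ⟩ := exists_spanner_iso_le_two (e ⟨v, rfl⟩)
  let e' := e.trans σ
  refine ⟨(Embedding.induce _).comp e'.symm.toRelEmbedding, ?_, e' ⟨v, rfl⟩, hσ, ?_⟩
  · exact (e'.symm.surjective.range_comp Subtype.val).trans Subtype.range_val
  · exact congrArg Subtype.val (e'.symm_apply_apply ⟨v, rfl⟩)

theorem IsSForest.exists_isPathPartition_biUnion (hF : IsSForest F) (hFG : F ≤ G)
    (T : Finset F.ConnectedComponent) :
    ∃ P, IsPathPartition G (⋃ c ∈ T, c.supp) P ∧ 5 * P.length ≤ P.flatten.length := by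
  classical
  induction T using Finset.induction_on with
  | empty => exact ⟨[], ⟨⟨by simp, by simp⟩, by simp⟩, le_rfl⟩
  | insert c T hc ih =>
    obtain ⟨P, hP, hlen⟩ := ih
    obtain ⟨v, rfl⟩ : ∃ v, F.connectedComponentMk v = c := c.exists_rep
    obtain ⟨φ, hφ, -⟩ := hF.exists_embedding v
    have hQ := isPathPartition_spannerPaths.map φ.injective (le_comap_of_le hFG)
    rw [hφ] at hQ
    have hdisj : Disjoint (F.connectedComponentMk v).supp (⋃ d ∈ T, d.supp) :=
      Set.disjoint_iUnion₂_right.2 fun d hd ↦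
        pairwise_disjoint_supp_connectedComponent F fun h ↦ hc (h ▸ hd)
    rw [Finset.set_biUnion_insert]
    refine ⟨_, hQ.union hP hdisj, ?_⟩
    simp only [spannerPaths, List.map_cons, List.map_nil, List.length_append, List.length_cons,
      List.length_nil, List.flatten_append, List.flatten_cons, List.flatten_nil]
    omega

theorem IsSForest.isPathRigid_biUnion [Finite V] (hF : IsSForest F) (hFG : F ≤ G)
    (h : 5 * gAlpha G ≤ 4 * gBeta G) (T : Finset F.ConnectedComponent) :
    IsPathRigid G (⋃ c ∈ T, c.supp) := by
  classical
  have := Fintype.ofFinite F.ConnectedComponent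
  obtain ⟨Q, hQ, hlen⟩ := hF.exists_isPathPartition_biUnion hFG Tᶜ
  refine IsPathRigid.of_union ?_ ?_ hQ hlen
  · rw [← Finset.set_biUnion_union, Finset.union_compl]
    convert isPathRigid_univ h
    simpa using iUnion_connectedComponentSupp F
  · simp only [Set.disjoint_iUnion₂_left, Set.disjoint_iUnion₂_right]
    exact fun d hd c hc ↦ pairwise_disjoint_supp_connectedComponent F
      fun hcd ↦ Finset.mem_compl.1 hd (hcd ▸ hc)

theorem IsSForest.le_two_of_adj [Finite V] (hF : IsSForest F) (hFG : F ≤ G)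
    (h : 5 * gAlpha G ≤ 4 * gBeta G) {c : F.ConnectedComponent} {φ : Spanner10 ↪g F}
    (hφ : Set.range φ = c.supp) {j : Fin 10} (hadj : G.Adj (φ 0) (φ j)) : j ≤ 2 := by
  by_contra! hj
  have hrigid : IsPathRigid G (Set.range φ) := by
    simpa only [hφ, Finset.set_biUnion_singleton] using hF.isPathRigid_biUnion hFG h {c}
  exact not_isPathRigid_spanner_sup_edge hj
    (hrigid.of_injective φ.injective (sup_edge_le_comap (le_comap_of_le hFG) hadj))

theorem IsSForest.mem_range_of_adj [Finite V] (hF : IsSForest F) (hFG : F ≤ G)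
    (h : 5 * gAlpha G ≤ 4 * gBeta G) {c : F.ConnectedComponent} {φ : Spanner10 ↪g F}
    (hφ : Set.range φ = c.supp) {v : V} (hadj : G.Adj (φ 0) v) : v ∈ Set.range φ := by
  classical
  by_contra hv
  obtain ⟨ψ, hψ, j, hj, rfl⟩ := hF.exists_embedding v
  have hcd : c ≠ F.connectedComponentMk (ψ j) := fun hcd ↦ hv (hφ ▸ hcd.symm)
  have hrigid : IsPathRigid G (Set.range (Sum.elim φ ψ)) := by
    simpa only [Set.Sum.elim_range, hφ, hψ, Finset.set_biUnion_insert,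
      Finset.set_biUnion_singleton] using
        hF.isPathRigid_biUnion hFG h {c, F.connectedComponentMk (ψ j)}
  have hinj : (Sum.elim φ ψ).Injective := φ.injective.sumElim ψ.injective fun a b ↦
    (pairwise_disjoint_supp_connectedComponent F hcd).ne_of_mem
      (hφ ▸ Set.mem_range_self a) (hψ ▸ Set.mem_range_self b)
  have hK : Spanner10 ⊕g Spanner10 ≤ G.comap (Sum.elim φ ψ) := by
    rintro (a | a) (b | b) hab
    exacts [hFG (φ.map_adj_iff.2 hab), absurd hab Bool.false_ne_true,
      absurd hab Bool.false_ne_true, hFG (ψ.map_adj_iff.2 hab)]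
  exact not_isPathRigid_two_spanners_sup_edge hj
    (hrigid.of_injective hinj (sup_edge_le_comap hK hadj))

end SForests

/-- if `β(G)/α(G) = 5/4`, `F` is any spanning S-forest of `G`, and
`(u, v)` is an edge of `G` not in `F` with `u` a 1-vertex of `F`, then `v` is the base
of `u`: a 3-vertex of `F` at `F`-distance 2 from `u`. -/
theorem stmt16 {V : Type*} [Fintype V] [DecidableEq V] (G F : SimpleGraph V)
    (hiso : ∀ v : V, ∃ u : V, G.Adj v u)
    (heq : 4 * gBeta G = 5 * gAlpha G)
    (hFG : F ≤ G) (hF : IsSForest F) (u v : V)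
    (huv : G.Adj u v) (hnF : ¬ F.Adj u v) (hu : fdeg F u = 1) :
    fdeg F v = 3 ∧ F.dist u v = 2 := by
  have h : 5 * gAlpha G ≤ 4 * gBeta G := heq.ge
  obtain ⟨φ, hφ, i, hi, rfl⟩ := hF.exists_embedding u
  have hdeg {k : Fin 10} (hk : k ≤ 2) : fdeg F (φ k) = k.val + 1 :=
    (fdeg_apply_of_range_eq_supp hφ k).trans (fdeg_spanner hk)
  obtain rfl : i = 0 := by
    rw [hdeg hi] at hu
    omega
  obtain ⟨j, rfl⟩ := hF.mem_range_of_adj hFG h hφ huv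
  have hj : j ≤ 2 := hF.le_two_of_adj hFG h hφ huv
  have h01 : F.Adj (φ 0) (φ 1) := φ.map_adj_iff.2 (by decide)
  have h12 : F.Adj (φ 1) (φ 2) := φ.map_adj_iff.2 (by decide)
  obtain rfl : j = 2 := by
    have hj0 : j ≠ 0 := fun hj0 ↦ huv.ne (congrArg φ hj0.symm)
    have hj1 : j ≠ 1 := fun hj1 ↦ hnF (hj1 ▸ h01)
    omega
  exact ⟨hdeg le_rfl, dist_eq_two_of_adj_adj h01 h12 huv.ne hnF⟩
end

section
/- Let G be an S-graph with a spanning S-forest F satisfying condition (b): whenever a 1-vertex u of F is incident to an edge from Δ(G, F), the 2-vertex of F adjacent to u in F is not incident to any edge from B(G, F). Then there exists a pair (S, S') ∈ M₂(G) such that no edge of S ∪ S' belongs to Δ(G, F). -/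
open SimpleGraph

/-!
By condition (b), a `Δ(G, F)`-edge `uw` closes a triangle `uvw` of `G` in which `v` has no
neighbours besides `u` and `w`. If a matching `H` contains `uw`, then nothing else in `H` meets
the triangle, so `uw` may be replaced by either of `vu` and `vw`. A second matching `H'`
contains at most one of these two edges, hence the replacement can be made disjointly from `H'`.
It preserves `|H|` and removes one `Δ(G, F)`-edge. Clearing first `H` and then `H'` in this way
turns any pair in `M₂(G)` into one avoiding `Δ(G, F)`.
-/

section Matchings

variable {V : Type*} {G : SimpleGraph V} {M N : Finset (Sym2 V)} {e f : Sym2 V} {v x y : V}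

lemma IsMatchingE.eq_of_mem_of_mem_s18 (hM : IsMatchingE G M) (he : e ∈ M) (hf : f ∈ M)
    (hve : v ∈ e) (hvf : v ∈ f) : e = f :=
  by_contra fun hne => hM.2 e he f hf hne v ⟨hve, hvf⟩

lemma IsMatchingE.mono (hM : IsMatchingE G M) (hNM : N ⊆ M) : IsMatchingE G N :=
  ⟨(Finset.coe_subset.2 hNM).trans hM.1, fun e he f hf => hM.2 e (hNM he) f (hNM hf)⟩

lemma isMatchingE_empty : IsMatchingE G ∅ := by
  simp [IsMatchingE]

lemma IsMatchingE.card_le_ncard_edgeSet [Finite G.edgeSet] (hM : IsMatchingE G M) :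
    M.card ≤ G.edgeSet.ncard := by
  rw [← Set.ncard_coe_finset]
  exact Set.ncard_le_ncard hM.1

lemma exists_inM2 (G : SimpleGraph V) [Finite G.edgeSet] :
    ∃ H H' : Finset (Sym2 V), InM2 G H H' := by
  obtain ⟨H, H', hH, hH', hdisj, hlam⟩ : gLam G ∈ {n | ∃ H H' : Finset (Sym2 V),
      IsMatchingE G H ∧ IsMatchingE G H' ∧ Disjoint H H' ∧ H.card + H'.card = n} := by
    refine Nat.sSup_mem ⟨0, ∅, ∅, isMatchingE_empty, isMatchingE_empty, by simp, by simp⟩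
      ⟨G.edgeSet.ncard + G.edgeSet.ncard, ?_⟩
    rintro _ ⟨H, H', hH, hH', -, rfl⟩
    exact Nat.add_le_add hH.card_le_ncard_edgeSet hH'.card_le_ncard_edgeSet
  have halpha : gAlpha G ∈ {n | ∃ H H' : Finset (Sym2 V), IsMatchingE G H ∧ IsMatchingE G H' ∧
      Disjoint H H' ∧ H.card + H'.card = gLam G ∧ H.card = n} := by
    refine Nat.sSup_mem ⟨H.card, H, H', hH, hH', hdisj, hlam, rfl⟩ ⟨G.edgeSet.ncard, ?_⟩
    rintro _ ⟨K, -, hK, -, -, -, rfl⟩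
    exact hK.card_le_ncard_edgeSet
  exact halpha

variable [DecidableEq V]

lemma IsMatchingE.insert_of_not_covers (hM : IsMatchingE G M) (hxy : G.Adj x y)
    (hx : ¬Covers M x) (hy : ¬Covers M y) : IsMatchingE G (insert s(x, y) M) := by
  have hmeet : ∀ f ∈ M, ∀ z ∈ s(x, y), z ∉ f := by
    intro f hf z hz hzf
    rcases Sym2.mem_iff.1 hz with rfl | rfl
    · exact hx ⟨f, hf, hzf⟩
    · exact hy ⟨f, hf, hzf⟩
  refine ⟨?_, fun e he f hf hne z ⟨hze, hzf⟩ => ?_⟩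
  · rw [Finset.coe_insert, Set.insert_subset_iff]
    exact ⟨hxy, hM.1⟩
  · rcases Finset.mem_insert.1 he with rfl | he <;> rcases Finset.mem_insert.1 hf with rfl | hf
    · exact hne rfl
    · exact hmeet f hf z hze hzf
    · exact hmeet e he z hzf hze
    · exact hM.2 e he f hf hne z ⟨hze, hzf⟩

lemma IsMatchingE.not_covers_erase (hM : IsMatchingE G M) (he : e ∈ M) (hv : v ∈ e) :
    ¬Covers (M.erase e) v := by
  rintro ⟨f, hf, hvf⟩
  rw [Finset.mem_erase] at hf
  exact hf.1 (hM.eq_of_mem_of_mem_s18 hf.2 he hvf hv)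

end Matchings

section Apexes

variable {V : Type*} {G : SimpleGraph V} {M N : Finset (Sym2 V)} {D : Set (Sym2 V)} {e : Sym2 V}
  {v y : V}

/-- `v` is an apex over the pair `e` in `G`: its neighbours are exactly the two ends of `e`. When
`e` is an edge, it can be exchanged in any matching for an edge from `v` to either of its ends. -/
def IsApex (G : SimpleGraph V) (v : V) (e : Sym2 V) : Prop := ∀ x, G.Adj v x ↔ x ∈ e

/-- Every pair in `D` has an apex in `G` that belongs to no pair in `D`, so that exchanging an edge
of `D` for one at its apex never creates another edge of `D`. -/
def HasFreeApexes (G : SimpleGraph V) (D : Set (Sym2 V)) : Prop :=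
  ∀ e ∈ D, ∃ v, IsApex G v e ∧ ∀ f ∈ D, v ∉ f

lemma IsApex.not_covers_erase [DecidableEq V] (hv : IsApex G v e) (hM : IsMatchingE G M)
    (he : e ∈ M) : ¬Covers (M.erase e) v := by
  rintro ⟨_, hf, x, rfl⟩
  have hvx : G.Adj v x := hM.1 (Finset.mem_of_mem_erase hf)
  exact hM.not_covers_erase he ((hv x).1 hvx) ⟨_, hf, Sym2.mem_mk_right v x⟩

lemma IsApex.isMatchingE_swap [DecidableEq V] (hv : IsApex G v e) (hM : IsMatchingE G M)
    (he : e ∈ M) (hy : y ∈ e) : IsMatchingE G (insert s(v, y) (M.erase e)) :=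
  (hM.mono (M.erase_subset e)).insert_of_not_covers ((hv y).2 hy) (hv.not_covers_erase hM he)
    (hM.not_covers_erase he hy)

lemma IsApex.card_swap [DecidableEq V] (hv : IsApex G v e) (hM : IsMatchingE G M) (he : e ∈ M)
    (y : V) : (insert s(v, y) (M.erase e)).card = M.card := by
  have hvy : s(v, y) ∉ M.erase e := fun h =>
    hv.not_covers_erase hM he ⟨_, h, Sym2.mem_mk_left v y⟩
  rw [Finset.card_insert_of_notMem hvy, Finset.card_erase_add_one he]

lemma IsMatchingE.exists_mem_mk_notMem (hN : IsMatchingE G N) (he : ¬e.IsDiag) (v : V) :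
    ∃ y ∈ e, s(v, y) ∉ N := by
  induction e with | _ u w
  by_contra! h
  have heq : s(v, u) = s(v, w) :=
    hN.eq_of_mem_of_mem_s18 (h u (Sym2.mem_mk_left u w)) (h w (Sym2.mem_mk_right u w))
      (Sym2.mem_mk_left v u) (Sym2.mem_mk_left v w)
  exact he (Sym2.mk_isDiag_iff.2 (Sym2.congr_right.1 heq))

lemma HasFreeApexes.exists_ncard_inter_lt (hD : HasFreeApexes G D) (hM : IsMatchingE G M)
    (hN : IsMatchingE G N) (hMN : Disjoint M N) (heM : e ∈ M) (heD : e ∈ D) :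
    ∃ M', IsMatchingE G M' ∧ Disjoint M' N ∧ M'.card = M.card ∧
      (↑M' ∩ D).ncard < (↑M ∩ D).ncard := by
  classical
  obtain ⟨v, hv, hvD⟩ := hD e heD
  obtain ⟨y, hy, hyN⟩ := hN.exists_mem_mk_notMem (G.not_isDiag_of_mem_edgeSet (hM.1 heM)) v
  have hvyD : s(v, y) ∉ D := fun h => hvD _ h (Sym2.mem_mk_left v y)
  have hinter : (↑(insert s(v, y) (M.erase e)) ∩ D : Set (Sym2 V)) = (↑M ∩ D) \ {e} := by
    rw [Finset.coe_insert, Finset.coe_erase, Set.insert_inter_of_notMem hvyD,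
      Set.inter_sdiff_right_comm]
  refine ⟨_, hv.isMatchingE_swap hM heM hy, ?_, hv.card_swap hM heM y, ?_⟩
  · exact Finset.disjoint_insert_left.2 ⟨hyN, hMN.mono_left (M.erase_subset e)⟩
  · rw [hinter]
    exact Set.ncard_sdiff_singleton_lt_of_mem ⟨heM, heD⟩ (M.finite_toSet.inter_of_left D)

lemma HasFreeApexes.exists_matching_avoiding (hD : HasFreeApexes G D) (hM : IsMatchingE G M)
    (hN : IsMatchingE G N) (hMN : Disjoint M N) :
    ∃ T, IsMatchingE G T ∧ Disjoint T N ∧ T.card = M.card ∧ ∀ e ∈ T, e ∉ D := by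
  induction hn : (↑M ∩ D).ncard using Nat.strong_induction_on generalizing M with
  | _ n ih =>
    by_cases hMD : ∀ e ∈ M, e ∉ D
    · exact ⟨M, hM, hMN, rfl, hMD⟩
    · push Not at hMD
      obtain ⟨e, heM, heD⟩ := hMD
      obtain ⟨M', hM', hM'N, hcard, hlt⟩ := hD.exists_ncard_inter_lt hM hN hMN heM heD
      obtain ⟨T, hT, hTN, hTcard, hTD⟩ := ih _ (hn ▸ hlt) hM' hM'N rfl
      exact ⟨T, hT, hTN, hTcard.trans hcard, hTD⟩

theorem HasFreeApexes.exists_inM2_avoiding [DecidableEq V] [Finite G.edgeSet]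
    (hD : HasFreeApexes G D) :
    ∃ S S' : Finset (Sym2 V), InM2 G S S' ∧ ∀ e ∈ S ∪ S', e ∉ D := by
  obtain ⟨H, H', hH, hH', hdisj, hlam, halpha⟩ := exists_inM2 G
  obtain ⟨S, hS, hSH', hScard, hSD⟩ := hD.exists_matching_avoiding hH hH' hdisj
  obtain ⟨S', hS', hS'S, hS'card, hS'D⟩ := hD.exists_matching_avoiding hH' hS hSH'.symm
  refine ⟨S, S', ⟨hS, hS', hS'S.symm, ?_, hScard.trans halpha⟩, fun e he => ?_⟩
  · rw [hScard, hS'card, hlam]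
  · exact (Finset.mem_union.1 he).elim (hSD e) (hS'D e)

end Apexes

section DeltaEdges

variable {V : Type*} {G F : SimpleGraph V} {e : Sym2 V} {u v w x : V}

lemma notMem_of_mem_deltaSet_of_fdeg_eq_two (hv : fdeg F v = 2) (he : e ∈ DeltaSet G F) :
    v ∉ e := by
  obtain ⟨-, u, w, rfl, hu, ⟨hw, -⟩⟩ := he
  rw [Sym2.mem_iff]
  rintro (rfl | rfl) <;> omega

lemma adj_of_notMem_bSet (hv : fdeg F v = 2) (hvx : G.Adj v x) (hB : s(v, x) ∉ BSet G F) :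
    F.Adj v x := by
  by_contra hF
  refine hB ⟨hvx, ?_⟩
  rintro ((hU | hL) | hΔ)
  · exact hF hU.1
  · exact hF hL.1
  · exact notMem_of_mem_deltaSet_of_fdeg_eq_two hv hΔ (Sym2.mem_mk_left v x)

lemma IsBase.ne_and_exists_adj_adj (h : IsBase F u w) : u ≠ w ∧ ∃ v, F.Adj u v ∧ F.Adj v w := by
  have hedist : F.edist u w = 2 := (ENat.toNat_eq_iff two_ne_zero).1 h.2
  obtain ⟨hne, -, v, huv, hwv⟩ := edist_eq_two_iff.1 hedist
  exact ⟨hne, v, huv, hwv.symm⟩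

lemma neighborSet_eq_pair_of_fdeg_eq_two (hv : fdeg F v = 2) (hne : u ≠ w) (hu : F.Adj v u)
    (hw : F.Adj v w) : F.neighborSet v = {u, w} := by
  refine (Set.eq_of_subset_of_ncard_le (Set.pair_subset hu hw) ?_
    (Set.finite_of_ncard_ne_zero (hv.trans_ne two_ne_zero))).symm
  rw [Set.ncard_pair hne]
  exact hv.le

lemma CondB.hasFreeApexes_deltaSet (hb : CondB G F) (hFG : F ≤ G)
    (hF : ∀ u v, fdeg F u = 1 → F.Adj u v → fdeg F v = 2) :
    HasFreeApexes G (DeltaSet G F) := by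
  rintro _ ⟨huw, u, w, rfl, hu, hw⟩
  obtain ⟨hne, v, huv, hvw⟩ := hw.ne_and_exists_adj_adj
  have hv : fdeg F v = 2 := hF u v hu huv
  have hnbr : F.neighborSet v = {u, w} := neighborSet_eq_pair_of_fdeg_eq_two hv hne huv.symm hvw
  refine ⟨v, fun x => ?_, fun f => notMem_of_mem_deltaSet_of_fdeg_eq_two hv⟩
  have hvB : s(v, x) ∉ BSet G F := fun h =>
    hb u v hu ⟨_, ⟨huw, u, w, rfl, hu, hw⟩, Sym2.mem_mk_left u w⟩ huv hv _ h (Sym2.mem_mk_left v x)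
  calc
    G.Adj v x ↔ x ∈ F.neighborSet v := ⟨fun h => adj_of_notMem_bSet hv h hvB, fun h => hFG h⟩
    _ ↔ x ∈ s(u, w) := by rw [hnbr, Sym2.mem_iff]; rfl

end DeltaEdges

section SForests

variable {V W : Type*} {F : SimpleGraph V}

lemma fdeg_iso {F' : SimpleGraph W} (φ : F ≃g F') (v : V) : fdeg F' (φ v) = fdeg F v :=
  (Nat.card_congr (φ.mapNeighborSet v)).symm

lemma fdeg_induce_supp (c : F.ConnectedComponent) (v : c.supp) :
    fdeg (F.induce c.supp) v = fdeg F v := by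
  have hsub : F.neighborSet v ⊆ Set.range ((↑) : c.supp → V) := fun x hx =>
    ⟨⟨x, c.mem_supp_of_adj_mem_supp v.2 hx⟩, rfl⟩
  rw [fdeg, neighborSet_induce, Set.ncard_preimage_of_injective_subset_range
    Subtype.val_injective hsub, fdeg]

lemma fdeg_spanner10_eq_two_of_adj {i j : Fin 10} (hi : fdeg Spanner10 i = 1)
    (hij : Spanner10.Adj i j) : fdeg Spanner10 j = 2 := by
  simp only [fdeg, Set.ncard_eq_toFinset_card', Spanner10] at hi hij ⊢
  revert i j
  decide

lemma IsSForest.fdeg_eq_two_of_adj (hF : IsSForest F) {u v : V} (hu : fdeg F u = 1)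
    (huv : F.Adj u v) : fdeg F v = 2 := by
  set c := F.connectedComponentMk u
  obtain ⟨φ⟩ := hF c
  have hfdeg (x : c.supp) : fdeg Spanner10 (φ x) = fdeg F x :=
    (fdeg_iso φ x).trans (fdeg_induce_supp c x)
  let u' : c.supp := ⟨u, rfl⟩
  let v' : c.supp := ⟨v, c.mem_supp_of_adj_mem_supp u'.2 huv⟩
  have hadj : Spanner10.Adj (φ u') (φ v') := φ.map_adj_iff.2 huv
  rw [← hfdeg v']
  exact fdeg_spanner10_eq_two_of_adj ((hfdeg u').trans hu) hadj

end SForests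

theorem stmt18_general {V : Type*} [DecidableEq V] (G F : SimpleGraph V) [Finite G.edgeSet]
    (hFG : F ≤ G) (hF : ∀ u v, fdeg F u = 1 → F.Adj u v → fdeg F v = 2) (hb : CondB G F) :
    ∃ S S' : Finset (Sym2 V), InM2 G S S' ∧
      ∀ e ∈ S ∪ S', e ∉ DeltaSet G F :=
  (hb.hasFreeApexes_deltaSet hFG hF).exists_inM2_avoiding

/-- if `G` is an S-graph with spanning S-forest `F` satisfying condition
(b), then there is a pair `(S, S') ∈ M₂(G)` with `(S ∪ S') ∩ Δ(G, F) = ∅`. -/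
theorem stmt18 {V : Type*} [Fintype V] [DecidableEq V] (G F : SimpleGraph V)
    (hFG : F ≤ G) (hF : IsSForest F) (hb : CondB G F) :
    ∃ S S' : Finset (Sym2 V), InM2 G S S' ∧
      ∀ e ∈ S ∪ S', e ∉ DeltaSet G F := by
  exact stmt18_general G F hFG (fun _ _ => hF.fdeg_eq_two_of_adj) hb
end
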